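/- Let k≥1 be an integer, let c>0, let ρ = ⌈1+1/c⌉, and let ℓ ≥ 3ρ−2 be an integer. Let K = ⌈k(3+1/c)^{ℓ+2}⌉, and let γ,λ>0 with λ,γ ≤ 2^{−8−ℓ}/(ρ³K). Let G be a graph, define δ = K^{−K}|G|^{−c}, and let A=(A_i : i∈I) be a blockade in G of length K, with linkage at most λ, that is not (γ,δ)-divergent. Then there is an A-rainbow bi-levelling (L, M, C) with length k and height exactly ℓ, such that C has A-size at least 2^{4−ℓ}/(ρ³K). -/

import Mathlib

noncomputable section

namespace PurePairs

open SimpleGraph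

variable {V W : Type*}

/-- A pure pair in `G`: a pair of disjoint vertex sets that are complete
or anticomplete to each other. -/
def PurePair (G : SimpleGraph V) (A B : Set V) : Prop :=
  Disjoint A B ∧
    ((∀ a ∈ A, ∀ b ∈ B, G.Adj a b) ∨ (∀ a ∈ A, ∀ b ∈ B, ¬ G.Adj a b))

/-- `G` contains `H`: some induced subgraph of `G` is isomorphic to `H`. -/
def Contains (G : SimpleGraph V) (H : SimpleGraph W) : Prop :=
  Nonempty (H ↪g G)

/-- The congestion of a graph `H`: the maximum (here: supremum, together with `0`)
of `1 - (|J|-1)/|E(J)|` over all subgraphs `J` of `H` with at least one edge.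
If `H` has no edges this is `0`. -/
def congestion (H : SimpleGraph V) : ℝ :=
  sSup ({0} ∪ {x : ℝ | ∃ J : H.Subgraph, J.edgeSet.Nonempty ∧
    x = 1 - ((J.verts.ncard : ℝ) - 1) / (J.edgeSet.ncard : ℝ)})

/-- `A` is anticomplete to `B`: no edges between them. -/
def Anticomplete (G : SimpleGraph V) (A B : Set V) : Prop :=
  ∀ a ∈ A, ∀ b ∈ B, ¬ G.Adj a b

/-- `A` covers `B`: every vertex of `B` has a neighbour in `A`. -/
def Covers (G : SimpleGraph V) (A B : Set V) : Prop :=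
  ∀ b ∈ B, ∃ a ∈ A, G.Adj a b

/-- `G` is `ε`-sparse: every vertex has degree less than `ε|G|`. -/
def EpsSparse (G : SimpleGraph V) [Fintype V] (ε : ℝ) : Prop :=
  ∀ v : V, ((G.neighborSet v).ncard : ℝ) < ε * (Fintype.card V : ℝ)

/-- `G` is `(γ,δ)`-coherent: there is no pair of disjoint anticomplete sets `A`, `B`
with `|A| ≥ γ` and `|B| ≥ δ`. -/
def Coherent (G : SimpleGraph V) (γ δ : ℝ) : Prop :=
  ¬ ∃ A B : Set V, Disjoint A B ∧ Anticomplete G A B ∧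
      γ ≤ (A.ncard : ℝ) ∧ δ ≤ (B.ncard : ℝ)

/-- `N(X)`: the set of vertices with a neighbour in `X`. -/
def nbhd (G : SimpleGraph V) (X : Set V) : Set V :=
  {v | ∃ x ∈ X, G.Adj x v}

/-- A blockade: a family of nonempty pairwise disjoint vertex sets indexed by a
finite set of integers. -/
def IsBlockade (I : Finset ℤ) (A : ℤ → Set V) : Prop :=
  (∀ i ∈ I, (A i).Nonempty) ∧
    ∀ i ∈ I, ∀ j ∈ I, i ≠ j → Disjoint (A i) (A j)

/-- The blockade `(A i : i ∈ I)` is `(γ,δ)`-divergent. -/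
def Divergent (G : SimpleGraph V) (I : Finset ℤ) (A : ℤ → Set V) (γ δ : ℝ) : Prop :=
  ∃ i ∈ I, ∃ j ∈ I, i ≠ j ∧ ∃ X ⊆ A i, ∃ Y ⊆ A j,
    γ * ((A i).ncard : ℝ) ≤ (X.ncard : ℝ) ∧ δ * ((A j).ncard : ℝ) ≤ (Y.ncard : ℝ) ∧
    Anticomplete G X Y

/-- The blockade `(A i : i ∈ I)` is `τ`-expanding. -/
def Expanding (G : SimpleGraph V) (I : Finset ℤ) (A : ℤ → Set V) (τ : ℝ) : Prop :=
  ∀ i ∈ I, ∀ j ∈ I, i ≠ j → ∀ X ⊆ A i,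
    min (τ * (X.ncard : ℝ) / ((A i).ncard : ℝ)) (1/4)
      ≤ (((nbhd G X) ∩ A j).ncard : ℝ) / ((A j).ncard : ℝ)

/-- The linkage of the blockade `(A i : i ∈ I)` is at most `lam`. -/
def LinkageLE (G : SimpleGraph V) (I : Finset ℤ) (A : ℤ → Set V) (lam : ℝ) : Prop :=
  ∀ i ∈ I, ∀ j ∈ I, i ≠ j → ∀ v ∈ A i,
    ((G.neighborSet v ∩ A j).ncard : ℝ) ≤ lam * ((A j).ncard : ℝ)

/-- The shrinkage of the blockade `(A i : i ∈ I)` is at most `σ`, i.e. its width is at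
least `|G|^{1-σ}`. -/
def ShrinkageLE [Fintype V] (I : Finset ℤ) (A : ℤ → Set V) (σ : ℝ) : Prop :=
  ∀ i ∈ I, (Fintype.card V : ℝ) ^ (1 - σ) ≤ ((A i).ncard : ℝ)

/-- `(L 0, …, L k)` is a levelling in `G`. -/
def IsLevelling (G : SimpleGraph V) (L : ℕ → Set V) (k : ℕ) : Prop :=
  1 ≤ k ∧ (L 0).ncard = 1 ∧
  (∀ i ≤ k, ∀ j ≤ k, i ≠ j → Disjoint (L i) (L j)) ∧
  (∀ i, 1 ≤ i → i ≤ k → Covers G (L (i-1)) (L i)) ∧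
  (∀ i, 2 ≤ i → i ≤ k → ∀ h, h + 2 ≤ i → Anticomplete G (L h) (L i))

/-- The levelling `(L 0, …, L k)` reaches `C`, i.e. `(L 0, …, L k, C)` is a levelling. -/
def Reaches (G : SimpleGraph V) (L : ℕ → Set V) (k : ℕ) (C : Set V) : Prop :=
  IsLevelling G (fun i => if i = k + 1 then C else L i) (k + 1)

/-- The levelling `(L 0, …, L k)` is `(B i : i ∈ I)`-rainbow. -/
def RainbowLevelling (I : Finset ℤ) (B : ℤ → Set V) (L : ℕ → Set V) (k : ℕ) : Prop :=
  ∃ q : ℕ → ℤ, (∀ i ≤ k, q i ∈ I ∧ L i ⊆ B (q i)) ∧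
    ∀ i ≤ k, ∀ j ≤ k, q i = q j → i = j

/-- The levelling `(L 0, …, L k)` grades the blockade `(C j : j ∈ J)` (in some order). -/
def Grades (G : SimpleGraph V) (L : ℕ → Set V) (k : ℕ) (J : Finset ℤ) (C : ℤ → Set V) :
    Prop :=
  Reaches G L k (⋃ j ∈ J, C j) ∧
  ∃ e : ℕ → ℤ, (∀ g < J.card, e g ∈ J) ∧
    (∀ g < J.card, ∀ h < J.card, e g = e h → g = h) ∧
    ∀ g < J.card, ∃ Y ⊆ L k,
      (∀ h, g ≤ h → h < J.card → Covers G Y (C (e h))) ∧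
      (∀ h, h < g → Anticomplete G Y (C (e h)))

/-- The levelling `(L 0, …, L k)` grades the blockade `(C j : j ∈ J)` forwards. -/
def GradesFwd (G : SimpleGraph V) (L : ℕ → Set V) (k : ℕ) (J : Finset ℤ) (C : ℤ → Set V) :
    Prop :=
  Reaches G L k (⋃ j ∈ J, C j) ∧
  ∀ j ∈ J, ∃ Y ⊆ L k,
    (∀ i ∈ J, j ≤ i → Covers G Y (C i)) ∧
    (∀ i ∈ J, i < j → Anticomplete G Y (C i))

/-- The levelling `(L 0, …, L k)` grades the blockade `(C j : j ∈ J)` backwards. -/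
def GradesBwd (G : SimpleGraph V) (L : ℕ → Set V) (k : ℕ) (J : Finset ℤ) (C : ℤ → Set V) :
    Prop :=
  Reaches G L k (⋃ j ∈ J, C j) ∧
  ∀ j ∈ J, ∃ Y ⊆ L k,
    (∀ i ∈ J, i ≤ j → Covers G Y (C i)) ∧
    (∀ i ∈ J, j < i → Anticomplete G Y (C i))

/-- Two levellings are parallel. -/
def Parallel (G : SimpleGraph V) (L : ℕ → Set V) (k : ℕ) (M : ℕ → Set V) (m : ℕ) : Prop :=
  L 0 = M 0 ∧
  Disjoint (⋃ j ∈ Finset.Icc 1 m, M j) (⋃ i ∈ Finset.Icc 1 k, L i) ∧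
  Anticomplete G (⋃ j ∈ Finset.Icc 1 m, M j) (⋃ i ∈ Finset.Icc 1 k, L i)

/-- `(L, M, C)` is a bi-levelling, where `L` has height `k` and `M` has height `m`:
`C` is a blockade, `L, M` are parallel levellings both reaching the union of the
blocks of `C`, and `L` grades `C` forwards. Its height is `k + m` and its length is
the length of `C`. -/
def IsBiLevelling (G : SimpleGraph V) (L : ℕ → Set V) (k : ℕ) (M : ℕ → Set V) (m : ℕ)
    (J : Finset ℤ) (C : ℤ → Set V) : Prop :=
  IsBlockade J C ∧ IsLevelling G L k ∧ IsLevelling G M m ∧ Parallel G L k M m ∧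
    Reaches G M m (⋃ j ∈ J, C j) ∧ GradesFwd G L k J C

/-- A bi-grading: a bi-levelling in which `M` also grades `C` backwards. -/
def IsBiGrading (G : SimpleGraph V) (L : ℕ → Set V) (k : ℕ) (M : ℕ → Set V) (m : ℕ)
    (J : Finset ℤ) (C : ℤ → Set V) : Prop :=
  IsBiLevelling G L k M m J C ∧ GradesBwd G M m J C

/-- The bi-levelling `(L, M, C)` is `(A i : i ∈ I)`-rainbow: each block of `C`, each
level of `L`, and each level of `M` other than `M 0 = L 0` is included in a block of
`A`, and distinct such sets lie in distinct blocks. -/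
def RainbowBiLevelling (I : Finset ℤ) (A : ℤ → Set V)
    (L : ℕ → Set V) (k : ℕ) (M : ℕ → Set V) (m : ℕ)
    (J : Finset ℤ) (C : ℤ → Set V) : Prop :=
  ∃ (qc : ℤ → ℤ) (ql qm : ℕ → ℤ),
    (∀ j ∈ J, qc j ∈ I ∧ C j ⊆ A (qc j)) ∧
    (∀ i ≤ k, ql i ∈ I ∧ L i ⊆ A (ql i)) ∧
    (∀ i, 1 ≤ i → i ≤ m → qm i ∈ I ∧ M i ⊆ A (qm i)) ∧
    (∀ j ∈ J, ∀ j' ∈ J, qc j = qc j' → j = j') ∧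
    (∀ i ≤ k, ∀ i' ≤ k, ql i = ql i' → i = i') ∧
    (∀ i, 1 ≤ i → i ≤ m → ∀ i', 1 ≤ i' → i' ≤ m → qm i = qm i' → i = i') ∧
    (∀ j ∈ J, ∀ i ≤ k, qc j ≠ ql i) ∧
    (∀ j ∈ J, ∀ i, 1 ≤ i → i ≤ m → qc j ≠ qm i) ∧
    (∀ i ≤ k, ∀ i', 1 ≤ i' → i' ≤ m → ql i ≠ qm i')

/-- Each block of `(C j : j ∈ J)` lies in a block of `(A i : i ∈ I)`; the `A`-size of
`C` is at least `η` when every block of `C` has size at least `η` times the size of the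
block of `A` containing it. -/
def SizeGE (I : Finset ℤ) (A : ℤ → Set V) (J : Finset ℤ) (C : ℤ → Set V) (η : ℝ) : Prop :=
  ∀ j ∈ J, ∀ i ∈ I, C j ⊆ A i → η * ((A i).ncard : ℝ) ≤ ((C j).ncard : ℝ)

/-- A `(B i : i ∈ I)`-rainbow induced path `p 0 - p 1 - ⋯ - p n` in `G`. -/
def RainbowPath (G : SimpleGraph V) (I : Finset ℤ) (B : ℤ → Set V)
    (n : ℕ) (p : ℕ → V) : Prop :=
  (∀ i ≤ n, ∀ j ≤ n, p i = p j → i = j) ∧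
  (∀ i < n, G.Adj (p i) (p (i+1))) ∧
  (∀ i j, i + 1 < j → j ≤ n → ¬ G.Adj (p i) (p j)) ∧
  ∃ q : ℕ → ℤ, (∀ i ≤ n, q i ∈ I ∧ p i ∈ B (q i)) ∧
    ∀ i ≤ n, ∀ j ≤ n, q i = q j → i = j

/-- A `(B i : i ∈ I)`-rainbow copy of `H` in `G`: an induced copy of `H` with each
vertex in a different block. -/
def RainbowCopy (G : SimpleGraph V) (I : Finset ℤ) (B : ℤ → Set V)
    (H : SimpleGraph W) : Prop :=
  ∃ (f : H ↪g G) (q : W → ℤ), Function.Injective q ∧ ∀ w : W, q w ∈ I ∧ f w ∈ B (q w)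

/-- `(N,K,σ,lam,c)` forces `H`. -/
def Forces (H : SimpleGraph W) (N K : ℕ) (σ lam c : ℝ) : Prop :=
  ∀ {V : Type} [Fintype V] (G : SimpleGraph V),
    Coherent G ((Fintype.card V : ℝ) ^ (1 - c)) ((Fintype.card V : ℝ) ^ (1 - c)) →
    N ≤ Fintype.card V →
    ∀ (I : Finset ℤ) (A : ℤ → Set V), IsBlockade I A → I.card = K →
      ShrinkageLE I A σ → LinkageLE G I A lam →
      RainbowCopy G I A H

/-- `p 0 - ⋯ - p n` is a handle of length `n` that can be added to (the graph induced
on) `S` inside the ambient graph `H`: an induced path of `H[S ∪ p]` of length at least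
two whose ends lie in `S`, whose internal vertices avoid `S` and have degree two in
`H[S ∪ p]`. -/
def IsHandle (H : SimpleGraph V) (S : Set V) (n : ℕ) (p : ℕ → V) : Prop :=
  2 ≤ n ∧
  (∀ i ≤ n, ∀ j ≤ n, p i = p j → i = j) ∧
  p 0 ∈ S ∧ p n ∈ S ∧
  (∀ i, 0 < i → i < n → p i ∉ S) ∧
  (∀ i < n, H.Adj (p i) (p (i+1))) ∧
  (∀ i j, i + 1 < j → j ≤ n → ¬ H.Adj (p i) (p j)) ∧
  (∀ i, 0 < i → i < n → ∀ w, (w ∈ S ∨ ∃ j ≤ n, w = p j) → H.Adj (p i) w →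
    w = p (i-1) ∨ w = p (i+1))

/-- The vertex sets `S` such that the induced subgraph `H[S]` can be built, starting
from the two-vertex graph with no edges, by repeatedly adding handles of length at
least `β`. -/
inductive BuildableOn (H : SimpleGraph V) (β : ℕ) : Set V → Prop
  | base (u v : V) (huv : u ≠ v) (hadj : ¬ H.Adj u v) : BuildableOn H β {u, v}
  | handle (S : Set V) (n : ℕ) (p : ℕ → V) (hS : BuildableOn H β S)
      (hh : IsHandle H S n p) (hn : β ≤ n) :
      BuildableOn H β (S ∪ {w | ∃ j ≤ n, w = p j})

/-- `H` is `β`-buildable. -/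
def Buildable [Fintype V] (H : SimpleGraph V) (β : ℕ) : Prop :=
  BuildableOn H β Set.univ

/-- The vertex sets `S` such that the induced subgraph `H[S]` can be built, starting
from the null graph, by repeatedly adding a subleaf or a handle of length at least
`β`. -/
inductive WeaklyBuildableOn (H : SimpleGraph V) (β : ℕ) : Set V → Prop
  | empty : WeaklyBuildableOn H β ∅
  | subleaf (S : Set V) (v : V) (hv : v ∉ S) (hdeg : (S ∩ H.neighborSet v).ncard ≤ 1)
      (hS : WeaklyBuildableOn H β S) : WeaklyBuildableOn H β (insert v S)
  | handle (S : Set V) (n : ℕ) (p : ℕ → V) (hS : WeaklyBuildableOn H β S)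
      (hh : IsHandle H S n p) (hn : β ≤ n) :
      WeaklyBuildableOn H β (S ∪ {w | ∃ j ≤ n, w = p j})

/-- `H` is weakly `β`-buildable. -/
def WeaklyBuildable [Fintype V] (H : SimpleGraph V) (β : ℕ) : Prop :=
  WeaklyBuildableOn H β Set.univ

/-!
Sizes of subsets of a block are measured as proportions of that block. A single vertex sees at most
a small proportion `θ` of another block, whereas a set of proportion at least `δ` sees all but `θ`
of it. Hence, up to an exceptional set, a set of proportion at most `δ` in one block sees a set
`θ / (2 * δ)` times as large in another. As `δ` is of order `|G| ^ (-c)`, `ρ - 2` such expansions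
lead from a typical vertex to a rainbow layering whose last level has proportion `δ`.

Two such layerings, `F` grown from the start `z 0` of a path and `M` from its end `z s`, together
see a constant proportion of every unused block. A vertex seen by both is joined to the path by a
transversal of `F`. Sorting these vertices by the last contact of the transversal with the path, and
by the levels of `F` and `M` that see them first, leaves at most `ρ ^ 4` cells. A popular cell is
reached by two parallel levellings, branching at the contact point, of total height at most
`3 * ρ - 3`; greedily choosing a covering part of the last level grades the blocks forwards.

The height is then raised by one at the cost of a factor `ρ` in length and about half of the
proportion: a part of the top of `M` that sees proportion `δ` of one block, but at most half of what
is guaranteed in each of `k` later blocks, covers a new level inside that first block, and this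
level in turn covers almost all vertices of the later blocks that the old part misses.
-/

section Density

/-- The proportion of `B` occupied by `X`, through which the sizes of subsets of different blocks
are compared. It is `0` when `B` is empty. -/
def density (B X : Set V) : ℝ := ((X ∩ B).ncard : ℝ) / (B.ncard : ℝ)

variable {B X Y : Set V}

theorem density_nonneg : 0 ≤ density B X := by
  unfold density
  positivity

theorem density_empty : density B ∅ = 0 := by simp [density]

theorem nonempty_of_density_pos (h : 0 < density B X) : (X ∩ B).Nonempty := by
  contrapose! h
  simp [density, h]

variable [Finite V]

theorem density_mono_of_inter_subset (h : X ∩ B ⊆ Y) : density B X ≤ density B Y := by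
  have hcard : (X ∩ B).ncard ≤ (Y ∩ B).ncard :=
    Set.ncard_le_ncard (Set.subset_inter h Set.inter_subset_right)
  unfold density
  gcongr

theorem density_mono (h : X ⊆ Y) : density B X ≤ density B Y :=
  density_mono_of_inter_subset (Set.inter_subset_left.trans h)

theorem density_union_of_disjoint (h : Disjoint X Y) :
    density B (X ∪ Y) = density B X + density B Y := by
  unfold density
  rw [← add_div, Set.union_inter_distrib_right,
    Set.ncard_union_eq (h.mono Set.inter_subset_left Set.inter_subset_left), Nat.cast_add]

theorem density_inter_add_diff : density B (X ∩ Y) + density B (X \ Y) = density B X := by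
  rw [← density_union_of_disjoint Set.disjoint_sdiff_inter.symm, Set.inter_union_sdiff]

theorem density_union_le : density B (X ∪ Y) ≤ density B X + density B Y := by
  rw [← Set.union_sdiff_self, density_union_of_disjoint Set.disjoint_sdiff_right]
  gcongr
  exact density_mono Set.sdiff_subset

theorem density_self (hB : B.Nonempty) : density B B = 1 := by
  rw [density, Set.inter_self,
    div_self (Nat.cast_ne_zero.2 ((Set.ncard_pos (Set.toFinite B)).2 hB).ne')]

theorem density_add_compl (hB : B.Nonempty) : density B X + density B Xᶜ = 1 := by
  rw [← density_self hB, ← density_inter_add_diff (X := B) (Y := X)]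
  congr 1 <;> unfold density <;> congr 3 <;> ext v <;> simp [and_comm]

theorem density_biUnion_le {ι : Type*} (s : Finset ι) (F : ι → Set V) :
    density B (⋃ x ∈ s, F x) ≤ ∑ x ∈ s, density B (F x) := by
  classical
  induction s using Finset.induction_on with
  | empty => simp [density_empty]
  | insert a s ha ih =>
    rw [Finset.set_biUnion_insert, Finset.sum_insert ha]
    exact density_union_le.trans (by gcongr)

theorem one_le_density_singleton_mul_card {v : V} (hv : v ∈ B) :
    1 ≤ density B {v} * Nat.card V := by
  have hpos : (0 : ℝ) < B.ncard := by exact_mod_cast (Set.ncard_pos (Set.toFinite B)).2 ⟨v, hv⟩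
  rw [density, Set.singleton_inter_of_mem hv, Set.ncard_singleton, div_mul_eq_mul_div,
    one_le_div hpos]
  exact_mod_cast (Set.ncard_le_card B).trans_eq (one_mul _).symm

theorem exists_density_ge_of_subset_biUnion {ι : Type*} {s : Finset ι} {F : ι → Set V} {N μ : ℝ}
    (hs : (s.card : ℝ) ≤ N) (hX : X ⊆ ⋃ x ∈ s, F x) (hμ : 0 < μ) (hμX : μ ≤ density B X) :
    ∃ x ∈ s, μ / N ≤ density B (F x) := by
  by_contra! hsmall
  have hsum : μ ≤ ∑ x ∈ s, density B (F x) :=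
    hμX.trans ((density_mono hX).trans (density_biUnion_le s F))
  have hne : s.Nonempty := by
    by_contra! h
    rw [h, Finset.sum_empty] at hsum
    linarith
  have hN : 0 < N := (Nat.cast_pos.2 hne.card_pos).trans_le hs
  have hlt : ∑ x ∈ s, density B (F x) < μ := by
    calc ∑ x ∈ s, density B (F x) < ∑ _x ∈ s, μ / N := Finset.sum_lt_sum_of_nonempty hne hsmall
      _ = s.card * (μ / N) := by rw [Finset.sum_const, nsmul_eq_mul]
      _ ≤ N * (μ / N) := by gcongr
      _ = μ := by field_simp
  exact hlt.not_ge hsum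

theorem exists_common_cell {ι κ : Type*} {J : Finset κ} (hJ : J.Nonempty) {A : κ → Set V}
    {T : Finset ι} {F : ι → Set V} {N : ℕ} (hT : T.card ≤ N) (hX : X ⊆ ⋃ τ ∈ T, F τ) {μ : ℝ}
    (hμ : 0 < μ) (hμX : ∀ j ∈ J, μ ≤ density (A j) X) :
    ∃ τ ∈ T, ∃ J' ⊆ J, J.card ≤ N * J'.card ∧ ∀ j ∈ J', μ / N ≤ density (A j) (F τ) := by
  classical
  let good (τ : ι) : Finset κ := J.filter fun j => μ / N ≤ density (A j) (F τ)
  have hcover : J ⊆ T.biUnion good := fun j hj => by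
    obtain ⟨τ, hτ, hle⟩ :=
      exists_density_ge_of_subset_biUnion (Nat.cast_le.2 hT) hX hμ (hμX j hj)
    exact Finset.mem_biUnion.2 ⟨τ, hτ, Finset.mem_filter.2 ⟨hj, hle⟩⟩
  suffices ∃ τ ∈ T, J.card ≤ N * (good τ).card by
    obtain ⟨τ, hτ, hcard⟩ := this
    exact ⟨τ, hτ, good τ, Finset.filter_subset _ _, hcard, fun j hj => (Finset.mem_filter.1 hj).2⟩
  by_contra! hfew
  have hne : T.Nonempty := (Finset.biUnion_nonempty.1 (hJ.mono hcover)).imp fun _ h => h.1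
  refine lt_irrefl (N * J.card) ?_
  calc N * J.card ≤ N * ∑ τ ∈ T, (good τ).card := by
        gcongr
        exact (Finset.card_le_card hcover).trans Finset.card_biUnion_le
    _ = ∑ τ ∈ T, N * (good τ).card := Finset.mul_sum _ _ _
    _ < ∑ _τ ∈ T, J.card := Finset.sum_lt_sum_of_nonempty hne hfew
    _ = T.card * J.card := by rw [Finset.sum_const, smul_eq_mul]
    _ ≤ N * J.card := by gcongr

end Density

section Neighbourhoods

variable {G : SimpleGraph V} {A B X Y : Set V}

theorem nbhd_mono (h : X ⊆ Y) : nbhd G X ⊆ nbhd G Y :=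
  fun _ ⟨x, hx, hxv⟩ => ⟨x, h hx, hxv⟩

theorem nbhd_empty : nbhd G ∅ = ∅ := by simp [nbhd]

theorem nbhd_singleton (v : V) : nbhd G {v} = G.neighborSet v := by
  ext
  simp [nbhd]

theorem nbhd_union : nbhd G (X ∪ Y) = nbhd G X ∪ nbhd G Y := by
  ext v
  simp only [nbhd, Set.mem_union, Set.mem_ofPred_eq, or_and_right, exists_or]

theorem nbhd_iUnion {ι : Sort*} (F : ι → Set V) : nbhd G (⋃ i, F i) = ⋃ i, nbhd G (F i) := by
  ext v
  simp only [nbhd, Set.mem_iUnion, Set.mem_ofPred_eq]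
  grind

theorem covers_iff_subset_nbhd : Covers G A B ↔ B ⊆ nbhd G A := Iff.rfl

theorem anticomplete_iff_disjoint_nbhd : Anticomplete G A B ↔ Disjoint (nbhd G A) B := by
  simp only [Anticomplete, Set.disjoint_left, nbhd, Set.mem_ofPred_eq]
  grind

theorem Covers.mono (h : Covers G A B) (hA : A ⊆ X) (hB : Y ⊆ B) : Covers G X Y :=
  fun y hy => nbhd_mono hA (h y (hB hy))

theorem Anticomplete.mono (h : Anticomplete G A B) (hX : X ⊆ A) (hY : Y ⊆ B) :
    Anticomplete G X Y :=
  fun x hx y hy => h x (hX hx) y (hY hy)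

theorem Anticomplete.symm (h : Anticomplete G A B) : Anticomplete G B A :=
  fun b hb a ha hba => h a ha b hb hba.symm

end Neighbourhoods

/-- A blockade with sparse links (linkage at most `θ`) in which every set of density at least `δ`
in one block has neighbours in all but a proportion less than `θ` of any other block. -/
structure NondivergentBlockade (G : SimpleGraph V) (I : Finset ℤ) (A : ℤ → Set V) (θ δ : ℝ) :
    Prop where
  isBlockade : IsBlockade I A
  linkageLE : LinkageLE G I A θ
  not_divergent : ¬ Divergent G I A δ θ
  one_lt_card : 1 < I.card

namespace NondivergentBlockade

variable {G : SimpleGraph V} {I : Finset ℤ} {A : ℤ → Set V} {θ δ : ℝ} {i j : ℤ} {X : Set V}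

variable [Finite V]

theorem ncard_pos (S : NondivergentBlockade G I A θ δ) (hi : i ∈ I) : (0 : ℝ) < (A i).ncard := by
  exact_mod_cast (Set.ncard_pos (Set.toFinite _)).2 (S.isBlockade.1 i hi)

theorem density_nbhd_singleton_le (S : NondivergentBlockade G I A θ δ) (hi : i ∈ I) (hj : j ∈ I)
    (hij : i ≠ j) {v : V} (hv : v ∈ A i) : density (A j) (nbhd G {v}) ≤ θ := by
  rw [density, nbhd_singleton, div_le_iff₀ (S.ncard_pos hj)]
  exact S.linkageLE i hi j hj hij v hv

theorem density_compl_nbhd_lt (S : NondivergentBlockade G I A θ δ) (hi : i ∈ I) (hj : j ∈ I)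
    (hij : i ≠ j) (hX : X ⊆ A i) (hδ : δ ≤ density (A i) X) :
    density (A j) (nbhd G X)ᶜ < θ := by
  rw [density, le_div_iff₀ (S.ncard_pos hi), Set.inter_eq_left.2 hX] at hδ
  by_contra! hθ
  rw [density, le_div_iff₀ (S.ncard_pos hj)] at hθ
  exact S.not_divergent ⟨i, hi, j, hj, hij, X, hX, _, Set.inter_subset_right, hδ, hθ,
    anticomplete_iff_disjoint_nbhd.2 (disjoint_compl_right.mono_right Set.inter_subset_left)⟩

theorem density_sub_lt_density_nbhd_inter (S : NondivergentBlockade G I A θ δ) (hi : i ∈ I)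
    (hj : j ∈ I) (hij : i ≠ j) (hX : X ⊆ A i) (hδ : δ ≤ density (A i) X) (F : Set V) :
    density (A j) F - θ < density (A j) (nbhd G X ∩ F) := by
  have hsplit := density_inter_add_diff (B := A j) (X := F) (Y := nbhd G X)
  have hmono : density (A j) (F \ nbhd G X) ≤ density (A j) (nbhd G X)ᶜ :=
    density_mono fun _ hx => hx.2
  rw [Set.inter_comm F] at hsplit
  linarith [S.density_compl_nbhd_lt hi hj hij hX hδ]

theorem density_singleton_lt (S : NondivergentBlockade G I A θ δ) (hθ : 2 * θ ≤ 1) (hi : i ∈ I)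
    {v : V} (hv : v ∈ A i) : density (A i) {v} < δ := by
  by_contra! h
  obtain ⟨j, hj, hji⟩ := Finset.exists_mem_ne S.one_lt_card i
  linarith [S.density_compl_nbhd_lt hi hj hji.symm (Set.singleton_subset_iff.2 hv) h,
    S.density_nbhd_singleton_le hi hj hji.symm hv,
    density_add_compl (S.isBlockade.1 j hj) (X := nbhd G {v})]

end NondivergentBlockade

section Layerings

/-- The adjacency conditions of a levelling `(R 0, …, R h)`: each layer covers the next one, and
layers that are not consecutive are anticomplete. Layers may be empty or overlap. -/
structure Layered (G : SimpleGraph V) (R : ℕ → Set V) (h : ℕ) : Prop where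
  covers : ∀ t < h, Covers G (R t) (R (t + 1))
  anticomplete : ∀ s t, s + 2 ≤ t → t ≤ h → Anticomplete G (R s) (R t)

/-- The vertices with a neighbour in `R t` and none in the earlier sets of the sequence `R`. -/
def firstNbhd (G : SimpleGraph V) (R : ℕ → Set V) (t : ℕ) : Set V :=
  {v | v ∈ nbhd G (R t) ∧ ∀ s < t, v ∉ nbhd G (R s)}

variable {G : SimpleGraph V} {R : ℕ → Set V} {h h' t x : ℕ} {T : Set V}

theorem covers_firstNbhd : Covers G (R t) (firstNbhd G R t) := fun _ hv => hv.1

theorem anticomplete_firstNbhd (hx : x < t) : Anticomplete G (R x) (firstNbhd G R t) :=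
  fun u hu _ hv huv => hv.2 x hx ⟨u, hu, huv⟩

theorem nbhd_accumulate_subset (G : SimpleGraph V) (R : ℕ → Set V) (h : ℕ) :
    nbhd G (Set.accumulate R h) ⊆ ⋃ t ∈ Finset.range (h + 1), firstNbhd G R t := by
  classical
  rintro v ⟨u, hu, huv⟩
  obtain ⟨t, ht, hut⟩ := Set.mem_accumulate.1 hu
  have hex : ∃ t, v ∈ nbhd G (R t) := ⟨t, u, hut, huv⟩
  have hle : Nat.find hex ≤ t := Nat.find_min' hex ⟨u, hut, huv⟩
  exact Set.mem_biUnion (Finset.mem_range.2 (by omega))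
    ⟨Nat.find_spec hex, fun s hs => Nat.find_min hex hs⟩

theorem Layered.mono (H : Layered G R h) (hh : h' ≤ h) : Layered G R h' where
  covers t ht := H.covers t (by omega)
  anticomplete s t hst ht := H.anticomplete s t hst (by omega)

theorem Layered.shift (H : Layered G R (x + h)) : Layered G (fun t => R (x + t)) h where
  covers t ht := H.covers (x + t) (by omega)
  anticomplete s t hst ht := H.anticomplete (x + s) (x + t) (by omega) (by omega)

theorem Layered.update_top (H : Layered G R h) (hT : T ⊆ R h) :
    Layered G (Function.update R h T) h where
  covers t ht := by
    rw [Function.update_of_ne ht.ne]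
    obtain rfl | hne := eq_or_ne (t + 1) h
    · exact (H.covers t ht).mono le_rfl (by simpa using hT)
    · simpa [Function.update_of_ne hne] using H.covers t ht
  anticomplete s t hst ht := by
    rw [Function.update_of_ne (by omega)]
    obtain rfl | hne := eq_or_ne t h
    · exact (H.anticomplete s t hst ht).mono le_rfl (by simpa using hT)
    · simpa [Function.update_of_ne hne] using H.anticomplete s t hst ht

theorem Layered.snoc (H : Layered G R h) (hcov : Covers G (R h) T)
    (hanti : ∀ s < h, Anticomplete G (R s) T) :
    Layered G (Function.update R (h + 1) T) (h + 1) where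
  covers t ht := by
    rw [Function.update_of_ne ht.ne]
    obtain rfl | hne := eq_or_ne t h
    · simpa using hcov
    · rw [Function.update_of_ne (by omega)]
      exact H.covers t (by omega)
  anticomplete s t hst ht := by
    rw [Function.update_of_ne (by omega)]
    obtain rfl | hne := eq_or_ne t (h + 1)
    · simpa using hanti s (by omega)
    · rw [Function.update_of_ne hne]
      exact H.anticomplete s t hst (by omega)

theorem accumulate_update_succ (R : ℕ → Set V) (h : ℕ) (T : Set V) :
    Set.accumulate (Function.update R (h + 1) T) (h + 1) = Set.accumulate R h ∪ T := by
  rw [Set.accumulate_succ, Function.update_self]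
  congr 1
  simp only [Set.accumulate_def]
  exact Set.iUnion₂_congr fun t ht => Function.update_of_ne (by omega) _ _

theorem exists_insert_first_time [Finite V] {P : Set V → Prop} {B S : Set V} (hB : ¬ P B)
    (hS : P (B ∪ S)) : ∃ T ⊆ S, ∃ y ∈ S, ¬ P (B ∪ T) ∧ P (B ∪ insert y T) := by
  induction S, S.toFinite using Set.Finite.induction_on with
  | empty => exact absurd (by simpa using hS) hB
  | @insert a S _ _ ih =>
    by_cases hP : P (B ∪ S)
    · obtain ⟨T, hT, y, hy, hTy⟩ := ih hP
      exact ⟨T, hT.trans (Set.subset_insert _ _), y, Set.mem_insert_of_mem _ hy, hTy⟩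
    · exact ⟨S, Set.subset_insert _ _, a, Set.mem_insert _ _, hP, hS⟩

theorem exists_accumulate_first_time [Finite V] {P : Set V → Prop} (h₀ : ¬ P (R 0))
    (hP : P (Set.accumulate R h)) :
    ∃ l < h, ∃ T ⊆ R (l + 1), ∃ y ∈ R (l + 1),
      ¬ P (Set.accumulate R l ∪ T) ∧ P (Set.accumulate R l ∪ insert y T) := by
  induction h with
  | zero => exact absurd (by simpa using hP) h₀
  | succ h ih =>
    by_cases hPh : P (Set.accumulate R h)
    · obtain ⟨l, hl, hT⟩ := ih hPh
      exact ⟨l, hl.trans h.lt_succ_self, hT⟩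
    · rw [Set.accumulate_succ] at hP
      exact ⟨h, h.lt_succ_self, exists_insert_first_time hPh hP⟩

theorem Layered.exists_transversal (H : Layered G R h) {v : V} (ht : t ≤ h) (hv : v ∈ R t) :
    ∃ f : ℕ → V, f t = v ∧ (∀ s ≤ t, f s ∈ R s) ∧ ∀ s < t, G.Adj (f s) (f (s + 1)) := by
  induction t generalizing v with
  | zero => exact ⟨fun _ => v, rfl, fun s hs => by rwa [Nat.le_zero.1 hs], by simp⟩
  | succ t ih =>
    obtain ⟨u, hu, huv⟩ := H.covers t ht v hv
    obtain ⟨f, hft, hfR, hf⟩ := ih (by omega) hu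
    refine ⟨Function.update f (t + 1) v, by simp, fun s hs => ?_, fun s hs => ?_⟩
    · obtain rfl | hne := eq_or_ne s (t + 1)
      · simpa using hv
      · simpa [hne] using hfR s (by omega)
    · rw [Function.update_of_ne hs.ne]
      obtain rfl | hne := eq_or_ne s t
      · simpa [hft] using huv
      · simpa [hne] using hf s (by omega)

end Layerings

section Rainbow

variable {κ κ' : Type*}

/-- The sets `X k` for `k ∈ S` lie in blocks of `(A i : i ∈ I)` with pairwise distinct labels
`q k`. -/
def IsRainbow (I : Finset ℤ) (A : ℤ → Set V) (S : Set κ) (X : κ → Set V) (q : κ → ℤ) : Prop :=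
  (∀ k ∈ S, q k ∈ I ∧ X k ⊆ A (q k)) ∧ S.InjOn q

variable {I I' : Finset ℤ} {A A' : ℤ → Set V} {S : Set κ} {S' : Set κ'} {X : κ → Set V}
  {X' : κ' → Set V} {q : κ → ℤ}

theorem IsRainbow.mono (H : IsRainbow I A S X q) (hI : I ⊆ I') (hA : ∀ i ∈ I, A i ⊆ A' i) :
    IsRainbow I' A' S X q :=
  ⟨fun k hk => ⟨hI (H.1 k hk).1, (H.1 k hk).2.trans (hA _ (H.1 k hk).1)⟩, H.2⟩

theorem IsRainbow.comp (H : IsRainbow I A S X q) {f : κ' → κ} (hf : S'.InjOn f)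
    (hS : S'.MapsTo f S) (hX : ∀ k ∈ S', X' k ⊆ X (f k)) : IsRainbow I A S' X' (q ∘ f) :=
  ⟨fun k hk => ⟨(H.1 _ (hS hk)).1, (hX k hk).trans (H.1 _ (hS hk)).2⟩, H.2.comp hf hS⟩

theorem IsRainbow.insert [DecidableEq κ] (H : IsRainbow I A S X q) {k : κ} (hk : k ∉ S) {j : ℤ}
    {T : Set V} (hj : j ∈ I') (hI : I ⊆ I') (hT : T ⊆ A j) (hq : ∀ i ∈ S, q i ≠ j) :
    IsRainbow I' A (insert k S) (Function.update X k T) (Function.update q k j) := by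
  have hne : ∀ i ∈ S, i ≠ k := fun i hi hik => hk (hik ▸ hi)
  refine ⟨fun i hi => ?_, ?_⟩
  · obtain rfl | hi := hi
    · simpa using ⟨hj, hT⟩
    · simpa [hne i hi] using (⟨hI (H.1 i hi).1, (H.1 i hi).2⟩ : q i ∈ I' ∧ X i ⊆ A (q i))
  · rintro i (rfl | hi) i' (rfl | hi') h
    · rfl
    · simp [hne i' hi', (hq i' hi').symm] at h
    · simp [hne i hi, hq i hi] at h
    · simp only [Function.update_of_ne (hne i hi), Function.update_of_ne (hne i' hi')] at h
      exact H.2 hi hi' h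

end Rainbow

/-- The numerical constraints on the linkage bound `θ`, the divergence threshold `δ` and the
inverse growth factor `β` for graphs with `n` vertices; a layering multiplies its density by at
least `1 / β` in each step, so `ρ - 2` steps suffice to grow from one vertex to density `δ`. -/
structure Regime (n ρ : ℕ) (θ δ β : ℝ) : Prop where
  δ_pos : 0 < δ
  θ_pos : 0 < θ
  β_pos : 0 < β
  β_le_half : β ≤ 1 / 2
  two_le : 2 ≤ ρ
  mul_δ_le : 8 * ρ * δ ≤ β * θ
  mul_θ_le : 256 * (ρ : ℝ) ^ 5 * θ ≤ 1
  pow_mul_lt : β ^ (ρ - 1) * n < 1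

namespace Regime

variable {n ρ : ℕ} {θ δ β : ℝ}

theorem two_le_cast (D : Regime n ρ θ δ β) : (2 : ℝ) ≤ ρ := by exact_mod_cast D.two_le

theorem mul_pow_four_θ_le (D : Regime n ρ θ δ β) : 512 * (ρ : ℝ) ^ 4 * θ ≤ 1 := by
  have := D.θ_pos
  calc 512 * (ρ : ℝ) ^ 4 * θ = 256 * (ρ : ℝ) ^ 4 * θ * 2 := by ring
    _ ≤ 256 * (ρ : ℝ) ^ 4 * θ * ρ := by gcongr; exact D.two_le_cast
    _ = 256 * (ρ : ℝ) ^ 5 * θ := by ring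
    _ ≤ 1 := D.mul_θ_le

theorem mul_ρ_θ_le (D : Regime n ρ θ δ β) : 4096 * ρ * θ ≤ 1 := by
  have := D.θ_pos
  calc 4096 * ρ * θ = 512 * (2 ^ 3 * ρ) * θ := by ring
    _ ≤ 512 * ((ρ : ℝ) ^ 3 * ρ) * θ := by gcongr; exact D.two_le_cast
    _ = 512 * (ρ : ℝ) ^ 4 * θ := by ring
    _ ≤ 1 := D.mul_pow_four_θ_le

theorem θ_le (D : Regime n ρ θ δ β) : 8192 * θ ≤ 1 := by
  nlinarith [D.mul_ρ_θ_le, D.two_le_cast, D.θ_pos]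

theorem mul_ρ_δ_le (D : Regime n ρ θ δ β) : 16 * (ρ * δ) ≤ θ := by
  nlinarith [D.mul_δ_le, D.β_le_half, D.θ_pos]

theorem δ_le (D : Regime n ρ θ δ β) : 32 * δ ≤ θ := by
  nlinarith [D.mul_ρ_δ_le, D.two_le_cast, D.δ_pos]

theorem δ_le_β (D : Regime n ρ θ δ β) : δ ≤ β := by
  nlinarith [D.mul_δ_le, D.two_le_cast, D.θ_le, D.δ_pos, D.β_pos]

theorem δ_le_of_one_le_pow_mul (D : Regime n ρ θ δ β) {p : ℕ} (hp : p + 2 = ρ) {d : ℝ}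
    (hd : 1 ≤ β ^ p * (d * n)) : δ ≤ d := by
  have hβ := D.β_pos
  have hlt : β ^ p * n * β < β ^ p * n * d := by
    calc β ^ p * n * β = β ^ (ρ - 1) * n := by rw [← hp, Nat.add_succ_sub_one]; ring
      _ < 1 := D.pow_mul_lt
      _ ≤ β ^ p * n * d := by rwa [mul_assoc, mul_comm (n : ℝ) d]
  exact D.δ_le_β.trans (lt_of_mul_lt_mul_left hlt (by positivity)).le

end Regime

section Growth

variable {G : SimpleGraph V} {I : Finset ℤ} {A E : ℤ → Set V} {θ δ β : ℝ} {ρ : ℕ} {i j i₀ : ℤ}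

/-- Every subset of `E` of density at most `δ` in `B` has a neighbourhood in `F` whose density in
`C` is larger by a factor `τ`. -/
def ExpandsInto (G : SimpleGraph V) (δ τ : ℝ) (B E C F : Set V) : Prop :=
  ∀ X ⊆ E, density B X ≤ δ → τ * density B X ≤ density C (nbhd G X ∩ F)

theorem ExpandsInto.mono {τ : ℝ} {B E E' C F : Set V} (h : ExpandsInto G δ τ B E C F)
    (hE : E' ⊆ E) : ExpandsInto G δ τ B E' C F :=
  fun X hX => h X (hX.trans hE)

/-- A layering of height `h` from the single vertex `w` in the block labelled `i₀`, whose other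
layers lie in distinct sets `E j` with `j ∈ T`; the layer `R t` lies in `E (q t)`. -/
structure RainbowGrowth (G : SimpleGraph V) (i₀ : ℤ) (T : Finset ℤ) (E : ℤ → Set V) (w : V)
    (h : ℕ) (q : ℕ → ℤ) (R : ℕ → Set V) : Prop where
  root : R 0 = {w}
  label_zero : q 0 = i₀
  rainbow : IsRainbow (insert i₀ T) E (Set.Iic h) R q
  layered : Layered G R h

namespace RainbowGrowth

variable {T : Finset ℤ} {w : V} {h l : ℕ} {q : ℕ → ℤ} {R : ℕ → Set V}

theorem mono {T' : Finset ℤ} {E' : ℤ → Set V} (H : RainbowGrowth G i₀ T E w h q R) (hT : T ⊆ T')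
    (hE : ∀ i ∈ insert i₀ T, E i ⊆ E' i) : RainbowGrowth G i₀ T' E' w h q R where
  root := H.root
  label_zero := H.label_zero
  rainbow := H.rainbow.mono (Finset.insert_subset_insert _ hT) hE
  layered := H.layered

theorem snoc (H : RainbowGrowth G i₀ T E w h q R) (hj : j ∉ insert i₀ T) (hl : l ≤ h) :
    RainbowGrowth G i₀ (insert j T) E w (l + 1) (Function.update q (l + 1) j)
      (Function.update R (l + 1) (firstNbhd G R l ∩ E j)) where
  root := by simpa using H.root
  label_zero := by simpa using H.label_zero
  rainbow := by
    have hsub : Set.Iic l ⊆ Set.Iic h := Set.Iic_subset_Iic.2 hl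
    have hR : IsRainbow (insert i₀ T) E (Set.Iic l) R q :=
      ⟨fun t ht => H.rainbow.1 t (hsub ht), H.rainbow.2.mono hsub⟩
    have hins := hR.insert (I' := insert i₀ (insert j T)) (k := l + 1) (T := firstNbhd G R l ∩ E j)
      (by simp) (by simp) (Finset.insert_subset_insert _ (Finset.subset_insert _ _))
      Set.inter_subset_right fun t ht hqt => hj (hqt ▸ (hR.1 t ht).1)
    rw [show Set.Iic (l + 1) = _ from Order.Iic_succ l]
    exact hins
  layered := (H.layered.mono hl).snoc
    (covers_firstNbhd.mono le_rfl Set.inter_subset_left)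
    fun s hs => (anticomplete_firstNbhd hs).mono le_rfl Set.inter_subset_left

end RainbowGrowth

variable [Finite V]

/- The discarded set is a maximal set `X` of density at most `2δ` that does not expand. By
nondivergence its density is at most `δ`, so adding a non-expanding subset of the rest would
contradict maximality. -/
theorem NondivergentBlockade.exists_expandsInto (S : NondivergentBlockade G I A θ δ) (hδ : 0 < δ)
    (hθ : 0 ≤ θ) (hi : i ∈ I) (hj : j ∈ I) (hij : i ≠ j) {X F : Set V} (hX : X ⊆ A i)
    (hF : 2 * θ ≤ density (A j) F) :
    ∃ B ⊆ X, density (A i) B ≤ δ ∧ ExpandsInto G δ (θ / (2 * δ)) (A i) (X \ B) (A j) F := by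
  let nonexpanding : Set (Set V) := {B | B ⊆ X ∧ density (A i) B ≤ 2 * δ ∧
    density (A j) (nbhd G B ∩ F) ≤ θ / (2 * δ) * density (A i) B}
  have hne : nonexpanding.Nonempty :=
    ⟨∅, Set.empty_subset _, by simp [density_empty, hδ.le], by simp [nbhd_empty, density_empty]⟩
  obtain ⟨B, ⟨hBX, hB2, hBexp⟩, hmax⟩ := (Set.toFinite nonexpanding).exists_maximal hne
  have hBδ : density (A i) B ≤ δ := by
    by_contra! hlt
    have hlarge := S.density_sub_lt_density_nbhd_inter hi hj hij (hBX.trans hX) hlt.le F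
    have hle : θ / (2 * δ) * density (A i) B ≤ θ / (2 * δ) * (2 * δ) := by gcongr
    rw [div_mul_cancel₀ θ (by positivity)] at hle
    linarith
  refine ⟨B, hBX, hBδ, fun Y hY hYδ => ?_⟩
  by_contra! hlt
  have hdisj : Disjoint B Y := Set.disjoint_sdiff_right.mono_right hY
  have hmem : B ∪ Y ∈ nonexpanding := by
    refine ⟨Set.union_subset hBX (hY.trans Set.sdiff_subset), ?_, ?_⟩
    · rw [density_union_of_disjoint hdisj]
      linarith
    · rw [density_union_of_disjoint hdisj, nbhd_union, Set.union_inter_distrib_right, mul_add]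
      exact density_union_le.trans (add_le_add hBexp hlt.le)
  have hYB : Y ⊆ B := Set.subset_union_right.trans (hmax hmem Set.subset_union_left)
  have hY0 : Y = ∅ := disjoint_self.1 (hdisj.mono_left hYB)
  simp [hY0, nbhd_empty, density_empty] at hlt

theorem NondivergentBlockade.exists_forall_expandsInto (S : NondivergentBlockade G I A θ δ)
    (hδ : 0 < δ) (hθ : 0 ≤ θ) (hi : i ∈ I) {T : Finset ℤ} (hT : T ⊆ I) (hiT : i ∉ T) {X : Set V}
    (hX : X ⊆ A i) (hE : ∀ j ∈ T, 2 * θ ≤ density (A j) (E j)) :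
    ∃ X' ⊆ X, density (A i) (X \ X') ≤ T.card * δ ∧
      ∀ j ∈ T, ExpandsInto G δ (θ / (2 * δ)) (A i) X' (A j) (E j) := by
  have hbad : ∀ j ∈ T, ∃ B ⊆ X, density (A i) B ≤ δ ∧
      ExpandsInto G δ (θ / (2 * δ)) (A i) (X \ B) (A j) (E j) := fun j hj =>
    S.exists_expandsInto hδ hθ hi (hT hj) (ne_of_mem_of_not_mem hj hiT).symm hX (hE j hj)
  choose! B _ hBδ hB using hbad
  refine ⟨X \ ⋃ j ∈ T, B j, Set.sdiff_subset, ?_, fun j hj => (hB j hj).mono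
    (Set.sdiff_subset_sdiff_right (Set.subset_biUnion_of_mem (u := B) hj))⟩
  calc density (A i) (X \ (X \ ⋃ j ∈ T, B j)) ≤ density (A i) (⋃ j ∈ T, B j) :=
        density_mono (by rw [Set.sdiff_sdiff_right_self]; exact Set.inter_subset_right)
    _ ≤ ∑ j ∈ T, density (A i) (B j) := density_biUnion_le _ _
    _ ≤ T.card • δ := Finset.sum_le_card_nsmul _ _ _ hBδ
    _ = T.card * δ := nsmul_eq_mul _ _

theorem NondivergentBlockade.exists_pairwise_expandsInto (S : NondivergentBlockade G I A θ δ)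
    (hδ : 0 < δ) (hθ : 0 ≤ θ) (l : List ℤ) (hl : l.Nodup) (hI : ∀ j ∈ l, j ∈ I)
    (hE : ∀ j ∈ l, E j ⊆ A j)
    (hdens : ∀ j ∈ l.tail, 2 * θ + l.length * δ ≤ density (A j) (E j)) :
    ∃ E' : ℤ → Set V, (∀ j ∈ l, E' j ⊆ E j) ∧
      (∀ j ∈ l, density (A j) (E j \ E' j) ≤ l.length * δ) ∧
      l.Pairwise fun i j => ExpandsInto G δ (θ / (2 * δ)) (A i) (E' i) (A j) (E' j) := by
  induction l with
  | nil => exact ⟨E, by simp⟩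
  | cons i l ih =>
    simp only [List.forall_mem_cons, List.nodup_cons] at hI hE hl
    simp only [List.length_cons, List.tail_cons, Nat.cast_add_one] at hdens ⊢
    obtain ⟨E', hE', hdiff, hpw⟩ := ih hl.2 hI.2 hE.2 fun j hj => by
      linarith [hdens j (List.mem_of_mem_tail hj)]
    have hlarge : ∀ j ∈ l.toFinset, 2 * θ ≤ density (A j) (E' j) := fun j hj => by
      rw [List.mem_toFinset] at hj
      have hsplit := density_inter_add_diff (B := A j) (X := E j) (Y := E' j)
      rw [Set.inter_eq_self_of_subset_right (hE' j hj)] at hsplit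
      linarith [hdens j hj, hdiff j hj]
    obtain ⟨X, hXE, hXdiff, hX⟩ := S.exists_forall_expandsInto hδ hθ hI.1
      (fun j hj => hI.2 j (List.mem_toFinset.1 hj)) (mt List.mem_toFinset.1 hl.1) hE.1 hlarge
    rw [List.toFinset_card_of_nodup hl.2] at hXdiff
    have hne : ∀ j ∈ l, j ≠ i := fun j hj => ne_of_mem_of_not_mem hj hl.1
    refine ⟨Function.update E' i X, ?_, ?_, ?_⟩
    · refine List.forall_mem_cons.2 ⟨by simpa using hXE, fun j hj => ?_⟩
      simpa [hne j hj] using hE' j hj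
    · refine List.forall_mem_cons.2 ⟨?_, fun j hj => ?_⟩
      · rw [Function.update_self]
        linarith
      · rw [Function.update_of_ne (hne j hj)]
        linarith [hdiff j hj]
    · refine List.pairwise_cons.2 ⟨fun j hj => ?_, hpw.imp_of_mem fun {a b} ha hb hab => ?_⟩
      · simpa [hne j hj] using hX j (List.mem_toFinset.2 hj)
      · rwa [Function.update_of_ne (hne a ha), Function.update_of_ne (hne b hb)]

variable {n : ℕ} {T : Finset ℤ} {w : V} {h : ℕ} {q : ℕ → ℤ} {R : ℕ → Set V}

/- Some class of first neighbours of a layer carries a `1 / ρ` proportion of the expansion. -/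
theorem RainbowGrowth.exists_density_le (D : Regime n ρ θ δ β)
    (H : RainbowGrowth G i₀ T E w h q R) (hh : h < ρ)
    (hpos : 0 < density (A (q h)) (R h)) (hδ : density (A (q h)) (R h) ≤ δ)
    (hexp : ExpandsInto G δ (θ / (2 * δ)) (A (q h)) (E (q h)) (A j) (E j)) :
    ∃ l ≤ h, density (A (q h)) (R h) ≤ β * density (A j) (firstNbhd G R l ∩ E j) := by
  have hδ₀ := D.δ_pos
  have hθ₀ := D.θ_pos
  have hρ₀ := D.two_le_cast
  have hcover : nbhd G (R h) ∩ E j ⊆ ⋃ l ∈ Finset.range (h + 1), firstNbhd G R l ∩ E j := by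
    rw [← Set.iUnion₂_inter]
    exact Set.inter_subset_inter_left _
      ((nbhd_mono (Set.subset_accumulate)).trans (nbhd_accumulate_subset G R h))
  obtain ⟨l, hl, hdens⟩ := exists_density_ge_of_subset_biUnion (N := ρ)
    (by rw [Finset.card_range]; exact_mod_cast hh) hcover (by positivity)
    (hexp _ (H.rainbow.1 h (Set.mem_Iic.2 le_rfl)).2 hδ)
  refine ⟨l, by simpa [Nat.lt_succ_iff] using hl, ?_⟩
  have hfactor : 1 ≤ β * (θ / (2 * δ)) / ρ := by
    rw [one_le_div (by linarith), mul_div_assoc', le_div_iff₀ (by positivity)]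
    nlinarith [D.mul_δ_le]
  calc density (A (q h)) (R h) ≤ β * (θ / (2 * δ)) / ρ * density (A (q h)) (R h) :=
        le_mul_of_one_le_left hpos.le hfactor
    _ = β * (θ / (2 * δ) * density (A (q h)) (R h) / ρ) := by ring
    _ ≤ β * density (A j) (firstNbhd G R l ∩ E j) := by
        gcongr
        exact D.β_pos.le

theorem exists_rainbowGrowth_of_pairwise_expandsInto (D : Regime (Nat.card V) ρ θ δ β)
    (hwE : w ∈ E i₀) (hwA : w ∈ A i₀) (l : List ℤ) (hl : (i₀ :: l).Nodup) (hlρ : l.length < ρ)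
    (hpw : (i₀ :: l).Pairwise fun i j =>
      ExpandsInto G δ (θ / (2 * δ)) (A i) (E i) (A j) (E j)) :
    ∃ h ≤ l.length, ∃ q R, RainbowGrowth G i₀ l.toFinset E w h q R ∧
      (δ ≤ density (A (q h)) (R h) ∨
        1 ≤ β ^ l.length * (density (A (q h)) (R h) * Nat.card V)) := by
  induction l using List.reverseRecOn with
  | nil =>
    refine ⟨0, le_rfl, fun _ => i₀, fun _ => {w}, ⟨rfl, rfl, ⟨by simpa using hwE, ?_⟩, ?_⟩, ?_⟩
    · exact fun s hs t ht _ => (Nat.le_zero.1 hs).trans (Nat.le_zero.1 ht).symm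
    · exact ⟨by simp, fun s t hst ht => by omega⟩
    · simpa using Or.inr (one_le_density_singleton_mul_card hwA)
  | append_singleton l j ih =>
    rw [← List.cons_append] at hl hpw
    rw [List.length_append, List.length_singleton] at hlρ ⊢
    obtain ⟨hpw', -, hexp⟩ := List.pairwise_append.1 hpw
    obtain ⟨h, hh, q, R, H, hR⟩ := ih (List.nodup_append.1 hl).1 (by omega) hpw'
    have hj : j ∉ insert i₀ l.toFinset := fun hj =>
      (List.nodup_append.1 hl).2.2 j (by simpa using hj) j (by simp) rfl
    have hT : (l ++ [j]).toFinset = insert j l.toFinset := by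
      ext
      simp
    rw [hT]
    by_cases hbig : δ ≤ density (A (q h)) (R h)
    · exact ⟨h, by omega, q, R, H.mono (Finset.subset_insert _ _) fun _ _ => le_rfl, Or.inl hbig⟩
    have hgrown := hR.resolve_left hbig
    have hpos : 0 < density (A (q h)) (R h) := by
      refine density_nonneg.lt_of_ne fun h0 => ?_
      norm_num [← h0] at hgrown
    have hqh : q h ∈ i₀ :: l := by simpa using (H.rainbow.1 h (Set.mem_Iic.2 le_rfl)).1
    obtain ⟨m, hm, hdens⟩ := H.exists_density_le D (by omega) hpos (not_le.1 hbig).le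
      (hexp _ hqh j (by simp))
    refine ⟨m + 1, by omega, _, _, H.snoc hj hm, Or.inr ?_⟩
    have hβ := D.β_pos
    calc 1 ≤ β ^ l.length * (density (A (q h)) (R h) * Nat.card V) := hgrown
      _ ≤ β ^ l.length * (β * density (A j) (firstNbhd G R m ∩ E j) * Nat.card V) := by gcongr
      _ = _ := by simp only [Function.update_self]; ring

theorem NondivergentBlockade.exists_rainbowGrowth (S : NondivergentBlockade G I A θ δ)
    (D : Regime (Nat.card V) ρ θ δ β) (hi₀ : i₀ ∈ I) (hT : T ⊆ I) (hi₀T : i₀ ∉ T)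
    (hcard : T.card + 2 = ρ) (hE : ∀ j ∈ insert i₀ T, E j ⊆ A j)
    (hdens : ∀ j ∈ T, 3 * θ ≤ density (A j) (E j)) :
    ∃ Bad : Set V, density (A i₀) Bad ≤ ρ * δ ∧ ∀ w ∈ E i₀, w ∉ Bad →
      ∃ h q R, 1 ≤ h ∧ h + 2 ≤ ρ ∧ RainbowGrowth G i₀ T E w h q R ∧
        δ ≤ density (A (q h)) (R h) := by
  have hδ := D.δ_pos
  have hlen : (i₀ :: T.toList).length + 1 = ρ := by simp [← hcard]
  have hlen' : (((i₀ :: T.toList).length : ℕ) : ℝ) ≤ ρ := by exact_mod_cast (by omega)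
  have hnd : (i₀ :: T.toList).Nodup := by simp [hi₀T, T.nodup_toList]
  obtain ⟨E', hE', hdiff, hpw⟩ := S.exists_pairwise_expandsInto (E := E) hδ D.θ_pos.le
    (i₀ :: T.toList) hnd (by simpa [hi₀, Finset.subset_iff] using hT) (by simpa using hE) (by
      simp only [List.tail_cons, Finset.mem_toList]
      intro j hj
      nlinarith [hdens j hj, D.mul_ρ_δ_le])
  refine ⟨E i₀ \ E' i₀, (hdiff i₀ (by simp)).trans (by gcongr), fun w hw hwbad => ?_⟩
  have hwA : w ∈ A i₀ := hE i₀ (by simp) hw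
  obtain ⟨h, hh, q, R, H, hR⟩ := exists_rainbowGrowth_of_pairwise_expandsInto D
    (by_contra fun hwE' => hwbad ⟨hw, hwE'⟩) hwA T.toList hnd
    (by rw [Finset.length_toList]; omega) hpw
  rw [Finset.toList_toFinset] at H
  rw [Finset.length_toList] at hh hR
  have hbig : δ ≤ density (A (q h)) (R h) := hR.elim id (D.δ_le_of_one_le_pow_mul hcard)
  refine ⟨h, q, R, Nat.one_le_iff_ne_zero.2 fun h0 => ?_, by omega,
    H.mono le_rfl fun j hj => hE' j (by simpa using hj), hbig⟩
  rw [h0, H.root, H.label_zero] at hbig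
  exact hbig.not_gt (S.density_singleton_lt (by linarith [D.θ_le, D.θ_pos]) hi₀ hwA)

end Growth

section BiLevellings

/-- `Y t ⊆ Λ` covers `C t, …, C (N - 1)` and is anticomplete to `C 0, …, C (t - 1)`, for each
`t < N`: the sets witnessing that a levelling with last level `Λ` grades `C` forwards. -/
structure IsGrading (G : SimpleGraph V) (Λ : Set V) (N : ℕ) (C Y : ℕ → Set V) : Prop where
  subset : ∀ t < N, Y t ⊆ Λ
  covers : ∀ t t', t ≤ t' → t' < N → Covers G (Y t) (C t')
  anticomplete : ∀ t < N, ∀ t' < t, Anticomplete G (Y t) (C t')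

/-- The names of the pieces of a bi-levelling `(L, M, C)`: the levels of `L`, the levels of `M`, and
the blocks of `C`. -/
inductive Piece
  | left (i : ℕ)
  | right (i : ℕ)
  | block (t : ℕ)

/-- The pieces of a bi-levelling with `L` of height `a`, `M` of height `b` and `N` blocks. The
common root counts as `left 0`, so `right 0` is left out. -/
def Piece.IsIn (a b N : ℕ) : Piece → Prop
  | left i => i ≤ a
  | right i => 1 ≤ i ∧ i ≤ b
  | block t => t < N

/-- The function on pieces given by `f` on the levels of `L`, `g` on the levels of `M` and `e` on
the blocks; `Piece.elim L M C` sends the name of a piece to the piece itself. -/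
def Piece.elim {α : Type*} (f g e : ℕ → α) : Piece → α
  | left i => f i
  | right i => g i
  | block t => e t

/-- A rainbow bi-levelling `(L, M, C)` with blocks `C 0, …, C (N - 1)` in the order in which `L`
grades them (as witnessed by `Y`), each of density at least `η` in the block of `A` given by the
labelling `q`. -/
structure OrderedBiLevelling (G : SimpleGraph V) (I : Finset ℤ) (A : ℤ → Set V)
    (L M C Y : ℕ → Set V) (a b N : ℕ) (η : ℝ) (q : Piece → ℤ) : Prop where
  one_le_left : 1 ≤ a
  one_le_right : 1 ≤ b
  root_eq : L 0 = M 0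
  root_ncard : (L 0).ncard = 1
  rainbow : IsRainbow I A {p | p.IsIn a b N} (Piece.elim L M C) q
  left : Layered G L a
  right : Layered G M b
  parallel : ∀ j, 1 ≤ j → j ≤ b → ∀ i, 1 ≤ i → i ≤ a → Anticomplete G (M j) (L i)
  left_anticomplete : ∀ i < a, ∀ t < N, Anticomplete G (L i) (C t)
  right_anticomplete : ∀ i < b, ∀ t < N, Anticomplete G (M i) (C t)
  right_covers : ∀ t < N, Covers G (M b) (C t)
  grading : IsGrading G (L a) N C Y
  le_density : ∀ t < N, η ≤ density (A (q (.block t))) (C t)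

/-- There is a rainbow bi-levelling of length `N` and height `h` whose blocks have density at least
`η`. -/
def HasBiLevelling (G : SimpleGraph V) (I : Finset ℤ) (A : ℤ → Set V) (N h : ℕ) (η : ℝ) : Prop :=
  ∃ L M C Y a b q, a + b = h ∧ OrderedBiLevelling G I A L M C Y a b N η q

end BiLevellings

section Grading

variable {G : SimpleGraph V}

theorem IsGrading.snoc {Λ X D : Set V} {N : ℕ} {C Y : ℕ → Set V} (H : IsGrading G Λ N C Y)
    (hX : X ⊆ Λ) (hC : ∀ t < N, Disjoint (nbhd G X) (C t)) (hD : D ⊆ nbhd G X) :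
    IsGrading G Λ (N + 1) (Function.update C N D)
      (Function.update (fun t => Y t ∪ X) N X) where
  subset t ht := by
    obtain rfl | hne := eq_or_ne t N
    · simpa using hX
    · simpa [hne] using ⟨H.subset t (by omega), hX⟩
  covers t t' htt' ht' := by
    obtain rfl | hne' := eq_or_ne t' N
    · have hXY : X ⊆ Function.update (fun t => Y t ∪ X) t' X t := by
        obtain rfl | hne := eq_or_ne t t' <;> simp [*]
      exact Covers.mono hD hXY (by simp)
    · rw [Function.update_of_ne (by omega), Function.update_of_ne hne']
      exact (H.covers t t' htt' (by omega)).mono Set.subset_union_left le_rfl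
  anticomplete t ht t' htt' := by
    have hXC : Anticomplete G X (C t') := anticomplete_iff_disjoint_nbhd.2 (hC t' (by omega))
    rw [Function.update_of_ne (show t' ≠ N by omega)]
    obtain rfl | hne := eq_or_ne t N
    · simpa using hXC
    · rw [Function.update_of_ne hne, anticomplete_iff_disjoint_nbhd, nbhd_union,
        Set.disjoint_union_left]
      exact ⟨anticomplete_iff_disjoint_nbhd.1 (H.anticomplete t (by omega) t' htt'),
        anticomplete_iff_disjoint_nbhd.1 hXC⟩

/- Let `X` grow one vertex at a time until its neighbourhood meets some `D j` with density `η`. -/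
theorem exists_subset_nbhd_density_le [Finite V] {A D : ℤ → Set V} {Λ : Set V} {J : Finset ℤ}
    {η θ : ℝ} (hη : 0 < η) (hlink : ∀ j ∈ J, ∀ v ∈ Λ, density (A j) (nbhd G {v}) ≤ θ)
    (hΛ : ∃ j ∈ J, η ≤ density (A j) (nbhd G Λ ∩ D j)) :
    ∃ X ⊆ Λ, (∃ j ∈ J, η ≤ density (A j) (nbhd G X ∩ D j)) ∧
      ∀ j ∈ J, density (A j) (nbhd G X ∩ D j) ≤ η + θ := by
  let P (X : Set V) : Prop := ∃ j ∈ J, η ≤ density (A j) (nbhd G X ∩ D j)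
  have hP₀ : ¬ P ∅ := by simp [P, nbhd_empty, density_empty, hη]
  obtain ⟨T, hT, y, hy, hPT, hPX⟩ := exists_insert_first_time (P := P) (B := ∅) (S := Λ) hP₀
    (by rwa [Set.empty_union])
  simp only [Set.empty_union] at hPT hPX
  refine ⟨insert y T, Set.insert_subset hy hT, hPX, fun j hj => ?_⟩
  have hTj : density (A j) (nbhd G T ∩ D j) < η := by
    by_contra! h
    exact hPT ⟨j, hj, h⟩
  have hsub : nbhd G (insert y T) ∩ D j ⊆ nbhd G {y} ∪ (nbhd G T ∩ D j) := by
    rw [Set.insert_eq, nbhd_union, Set.union_inter_distrib_right]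
    exact Set.union_subset_union_left _ Set.inter_subset_left
  linarith [(density_mono hsub).trans (density_union_le (B := A j)), hlink j hj y hy]

/- The last block is split off first, and the other blocks are found in the rest. -/
theorem exists_isGrading [Finite V] {A D : ℤ → Set V} {Λ : Set V} {J : Finset ℤ} {N : ℕ}
    {η θ : ℝ} (hη : 0 < η) (hθ : 0 ≤ θ) (hcov : ∀ j ∈ J, Covers G Λ (D j))
    (hlink : ∀ j ∈ J, ∀ v ∈ Λ, density (A j) (nbhd G {v}) ≤ θ)
    (hdens : ∀ j ∈ J, N * (η + θ) ≤ density (A j) (D j)) (hN : N ≤ J.card) :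
    ∃ (c : ℕ → ℤ) (C Y : ℕ → Set V), IsGrading G Λ N C Y ∧
      (∀ t < N, c t ∈ J ∧ C t ⊆ D (c t) ∧ η ≤ density (A (c t)) (C t)) ∧
      Set.InjOn c (Set.Iio N) := by
  induction N generalizing J D with
  | zero =>
    exact ⟨fun _ => 0, fun _ => ∅, fun _ => ∅, ⟨by simp, by simp, by simp⟩, by simp, by simp⟩
  | succ N ih =>
    simp only [Nat.cast_add_one, add_one_mul] at hdens
    obtain ⟨i, hi⟩ := Finset.card_pos.1 (N.succ_pos.trans_le hN)
    obtain ⟨X, hXΛ, ⟨j, hj, hjX⟩, hXsmall⟩ := exists_subset_nbhd_density_le (D := D) hη hlink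
      ⟨i, hi, by
        rw [Set.inter_eq_right.2 (covers_iff_subset_nbhd.1 (hcov i hi))]
        linarith [hdens i hi, mul_nonneg N.cast_nonneg (add_nonneg hη.le hθ)]⟩
    obtain ⟨c, C, Y, hgr, hC, hinj⟩ := ih (J := J.erase j) (D := fun i => D i \ nbhd G X)
      (fun i hi => (hcov i (Finset.mem_of_mem_erase hi)).mono le_rfl Set.sdiff_subset)
      (fun i hi => hlink i (Finset.mem_of_mem_erase hi)) (fun i hi => by
        have hi := Finset.mem_of_mem_erase hi
        have hsplit := density_inter_add_diff (B := A i) (X := D i) (Y := nbhd G X)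
        rw [Set.inter_comm] at hsplit
        linarith [hXsmall i hi, hdens i hi]) (by rw [Finset.card_erase_of_mem hj]; omega)
    refine ⟨Function.update c N j, _, _, hgr.snoc hXΛ (fun t ht => ?_)
      (Set.inter_subset_left (s := nbhd G X) (t := D j)), fun t ht => ?_, ?_⟩
    · exact Set.disjoint_sdiff_right.mono_right (hC t ht).2.1
    · obtain rfl | hne := eq_or_ne t N
      · simpa using ⟨hj, hjX⟩
      · obtain ⟨hcJ, hCD, hCη⟩ := hC t (by omega)
        simpa [hne, hCη] using ⟨Finset.mem_of_mem_erase hcJ, hCD.trans Set.sdiff_subset⟩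
    · have hcj : ∀ t < N, c t ≠ j := fun t ht => Finset.ne_of_mem_erase (hC t ht).1
      intro s hs t ht h
      simp only [Set.InjOn, Set.mem_Iio, Function.update_apply] at hinj hs ht h
      grind

end Grading

section Extension

variable {G : SimpleGraph V} {I : Finset ℤ} {A : ℤ → Set V} {L M C Y : ℕ → Set V}
  {a b N k o t₀ : ℕ} {η : ℝ} {q : Piece → ℤ}

theorem IsGrading.mono {Λ : Set V} {C' : ℕ → Set V} (H : IsGrading G Λ N C Y)
    (hC : ∀ t < N, C' t ⊆ C t) : IsGrading G Λ N C' Y where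
  subset := H.subset
  covers t t' htt' ht' := (H.covers t t' htt' ht').mono le_rfl (hC t' ht')
  anticomplete t ht t' htt' := (H.anticomplete t ht t' htt').mono le_rfl (hC t' (htt'.trans ht))

theorem IsGrading.drop {Λ : Set V} (H : IsGrading G Λ N C Y) (hok : o + k ≤ N) :
    IsGrading G (⋃ t ∈ Set.Ico o N, Y t) k (fun t => C (o + t)) (fun t => Y (o + t)) where
  subset t ht := Set.subset_biUnion_of_mem (u := Y) (Set.mem_Ico.2 (by omega))
  covers t t' htt' ht' := H.covers (o + t) (o + t') (by omega) (by omega)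
  anticomplete t ht t' htt' := H.anticomplete (o + t) (by omega) (o + t') (by omega)

/-- The pieces of the bi-levelling obtained by deleting the first `o` blocks, as pieces of the
original bi-levelling. -/
def Piece.drop (o : ℕ) : Piece → Piece
  | left i => left i
  | right i => right i
  | block t => block (o + t)

theorem Piece.drop_injective : Function.Injective (Piece.drop o) := by
  rintro (i | i | t) (j | j | u) h <;> grind [Piece.drop]

theorem Piece.mapsTo_drop (hok : o + k ≤ N) :
    Set.MapsTo (Piece.drop o) {p | p.IsIn a b k} {p | p.IsIn a b N} := by
  rintro (i | i | t) h
  · exact h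
  · exact h
  · exact (Nat.add_lt_add_left h o).trans_le hok

theorem OrderedBiLevelling.drop (H : OrderedBiLevelling G I A L M C Y a b N η q)
    (hok : o + k ≤ N) :
    OrderedBiLevelling G I A (Function.update L a (⋃ t ∈ Set.Ico o N, Y t)) M
      (fun t => C (o + t)) (fun t => Y (o + t)) a b k η (q ∘ Piece.drop o) := by
  have hL₀ : ∀ T, Function.update L a T 0 = L 0 := fun T =>
    Function.update_of_ne (Nat.one_le_iff_ne_zero.1 H.one_le_left).symm _ _
  have hsub : (⋃ t ∈ Set.Ico o N, Y t) ⊆ L a :=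
    Set.iUnion₂_subset fun t ht => H.grading.subset t ht.2
  have hL : ∀ i, Function.update L a (⋃ t ∈ Set.Ico o N, Y t) i ⊆ L i :=
    update_le_self_iff.2 hsub
  exact
  { one_le_left := H.one_le_left
    one_le_right := H.one_le_right
    root_eq := (hL₀ _).trans H.root_eq
    root_ncard := by rw [hL₀, H.root_ncard]
    rainbow := H.rainbow.comp Piece.drop_injective.injOn (Piece.mapsTo_drop hok) <| by
      rintro (i | i | t) -
      exacts [hL i, le_rfl, le_rfl]
    left := H.left.update_top hsub
    right := H.right
    parallel := fun j hj hjb i hi hia => (H.parallel j hj hjb i hi hia).mono le_rfl (hL i)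
    left_anticomplete := fun i hi t ht =>
      (H.left_anticomplete i hi (o + t) (by omega)).mono (hL i) le_rfl
    right_anticomplete := fun i hi t ht => H.right_anticomplete i hi (o + t) (by omega)
    right_covers := fun t ht => H.right_covers (o + t) (by omega)
    grading := by
      rw [Function.update_self]
      exact H.grading.drop hok
    le_density := fun t ht => H.le_density (o + t) (by omega) }

theorem OrderedBiLevelling.isRainbow_snoc_right [DecidableEq Piece] {M' C' : ℕ → Set V} {j : ℤ}
    (H : OrderedBiLevelling G I A L M C Y a b N η q) (hj : j ∈ I)
    (hX : M' (b + 1) ⊆ A j) (hqj : ∀ p : Piece, p.IsIn a b N → q p ≠ j)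
    (hM : ∀ i ≤ b, M' i ⊆ M i) (hC : ∀ t < N, C' t ⊆ C t) :
    IsRainbow I A {p | p.IsIn a (b + 1) N} (Piece.elim L M' C')
      (Function.update q (.right (b + 1)) j) := by
  have hpieces : {p : Piece | p.IsIn a (b + 1) N} = insert (.right (b + 1)) {p | p.IsIn a b N} := by
    ext (i | i | t) <;> simp [Piece.IsIn]
    omega
  rw [hpieces]
  refine (H.rainbow.insert (k := .right (b + 1)) (by simp [Piece.IsIn]) hj le_rfl hX hqj).comp
    (f := id) Function.injective_id.injOn (Set.mapsTo_id _) ?_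
  rintro p (rfl | hp)
  · simp [Piece.elim]
  · have hne : p ≠ .right (b + 1) := by
      rintro rfl
      exact absurd hp.2 (by omega)
    rw [id, Function.update_of_ne hne]
    rcases p with i | i | t
    exacts [le_rfl, hM i hp.2, hC t hp]

theorem OrderedBiLevelling.hasBiLevelling_snoc_right {s X : Set V} {j : ℤ} {C' : ℕ → Set V}
    (H : OrderedBiLevelling G I A L M C Y a b N η q) (hs : s ⊆ M b) (hsX : Covers G s X)
    (hLX : ∀ i ≤ a, Anticomplete G (L i) X) (hMX : ∀ i < b, Anticomplete G (M i) X)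
    (hj : j ∈ I) (hX : X ⊆ A j) (hqj : ∀ p : Piece, p.IsIn a b N → q p ≠ j)
    (hC : ∀ t < N, C' t ⊆ C t) (hXC : ∀ t < N, Covers G X (C' t))
    (hsC : ∀ t < N, Anticomplete G s (C' t)) {η' : ℝ}
    (hη : ∀ t < N, η' ≤ density (A (q (.block t))) (C' t)) :
    HasBiLevelling G I A N (a + (b + 1)) η' := by
  classical
  have hb := H.one_le_right
  set M' := Function.update (Function.update M b s) (b + 1) X with hM'
  have hM'top : M' (b + 1) = X := Function.update_self ..
  have hM'b : M' b = s := by simp [hM']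
  have hM'M : ∀ i ≤ b, M' i ⊆ M i := fun i hi => by
    rw [hM', Function.update_of_ne (by omega)]
    exact update_le_self_iff.2 hs i
  refine ⟨L, M', C', Y, a, b + 1, Function.update q (.right (b + 1)) j, rfl, ?_⟩
  exact
  { one_le_left := H.one_le_left
    one_le_right := by omega
    root_eq := by
      rw [hM', Function.update_of_ne (by omega), Function.update_of_ne (by omega), H.root_eq]
    root_ncard := H.root_ncard
    rainbow := H.isRainbow_snoc_right hj (by rwa [hM'top]) hqj hM'M hC
    left := H.left
    right := (H.right.update_top hs).snoc (by rwa [Function.update_self]) fun i hi => by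
      rw [Function.update_of_ne hi.ne]
      exact hMX i hi
    parallel := fun j hj hjb i hi hia => by
      obtain rfl | hne := eq_or_ne j (b + 1)
      · exact hM'top ▸ (hLX i hia).symm
      · exact (H.parallel j hj (by omega) i hi hia).mono (hM'M j (by omega)) le_rfl
    left_anticomplete := fun i hi t ht => (H.left_anticomplete i hi t ht).mono le_rfl (hC t ht)
    right_anticomplete := fun i hi t ht => by
      obtain rfl | hne := eq_or_ne i b
      · exact hM'b ▸ hsC t ht
      · exact (H.right_anticomplete i (by omega) t ht).mono (hM'M i (by omega)) (hC t ht)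
    right_covers := fun t ht => hM'top ▸ hXC t ht
    grading := H.grading.mono hC
    le_density := fun t ht => by simpa using hη t ht }

/- The new level of `M` comes from block `t₀`, and all surviving blocks come after it in the order
of the grading, so the part of `L a` that grades them has no neighbours in the new level. -/
theorem OrderedBiLevelling.hasBiLevelling_succ {s : Set V}
    (H : OrderedBiLevelling G I A L M C Y a b N η q) (hs : s ⊆ M b) (ht₀ : t₀ < o)
    (ht₀N : t₀ < N) (hok : o + k ≤ N) {η' : ℝ}
    (hη' : ∀ t < k, η' ≤ density (A (q (.block (o + t))))
      ((C (o + t) ∩ nbhd G (nbhd G s ∩ C t₀)) \ nbhd G s)) :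
    HasBiLevelling G I A k (a + (b + 1)) η' := by
  have hblock : .block t₀ ∈ {p | Piece.IsIn a b N p} := ht₀N
  have hΛ : Anticomplete G (⋃ t ∈ Set.Ico o N, Y t) (C t₀) := anticomplete_iff_disjoint_nbhd.2 <| by
    simp only [nbhd_iUnion, Set.disjoint_iUnion_left]
    exact fun t ht => anticomplete_iff_disjoint_nbhd.1
      (H.grading.anticomplete t ht.2 t₀ (ht₀.trans_le ht.1))
  refine (H.drop hok).hasBiLevelling_snoc_right (j := q (.block t₀)) (X := nbhd G s ∩ C t₀) hs
    Set.inter_subset_left (fun i hi => ?_) (fun i hi => ?_) (H.rainbow.1 _ hblock).1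
    (Set.inter_subset_right.trans (H.rainbow.1 (.block t₀) hblock).2) (fun p hp => ?_)
    (fun t _ => Set.sdiff_subset.trans Set.inter_subset_left)
    (fun t _ => Set.sdiff_subset.trans Set.inter_subset_right)
    (fun t _ => anticomplete_iff_disjoint_nbhd.2 Set.disjoint_sdiff_right) hη'
  · obtain rfl | hne := eq_or_ne i a
    · rw [Function.update_self]
      exact hΛ.mono le_rfl Set.inter_subset_right
    · rw [Function.update_of_ne hne]
      exact (H.left_anticomplete i (by omega) t₀ ht₀N).mono le_rfl Set.inter_subset_right
  · exact (H.right_anticomplete i hi t₀ ht₀N).mono le_rfl Set.inter_subset_right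
  · refine H.rainbow.2.ne (Piece.mapsTo_drop hok hp) hblock ?_
    cases p <;> simp [Piece.drop]
    omega

end Extension

section Unbalanced

variable [Finite V] {f : Set V → ℝ} {S : Set V} {δ : ℝ}

theorem mul_le_of_forall_subset_ncard_le (hsub : ∀ X Y, f (X ∪ Y) ≤ f X + f Y) (hδ : 0 ≤ δ) {r : ℕ}
    (hr : 0 < r) (hS : ∀ T ⊆ S, T.ncard ≤ r → f T ≤ δ) : f S * r ≤ δ * (S.ncard + r) := by
  induction hn : S.ncard using Nat.strong_induction_on generalizing S with
  | _ n ih =>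
    subst hn
    by_cases hc : S.ncard ≤ r
    · have hSδ := hS S le_rfl hc
      have : (0 : ℝ) ≤ δ * S.ncard := by positivity
      nlinarith [show (0 : ℝ) < r from Nat.cast_pos.2 hr]
    · obtain ⟨T, hT, hTc⟩ := Set.exists_subset_card_eq (s := S) (n := r) (by omega)
      have hcard := Set.ncard_sdiff_add_ncard_of_subset hT
      have hrest := ih (S \ T).ncard (by omega)
        (fun T' hT' => hS T' (hT'.trans Set.sdiff_subset)) rfl
      have hsplit := hsub T (S \ T)
      rw [Set.union_sdiff_cancel hT] at hsplit
      have hTδ := hS T hT hTc.le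
      have hcard' : ((S \ T).ncard : ℝ) + r = S.ncard := by exact_mod_cast hTc ▸ hcard
      nlinarith [show (0 : ℝ) < r from Nat.cast_pos.2 hr]

theorem exists_subset_le_and_ncard_mul_le (h₀ : f ∅ = 0) (hsub : ∀ X Y, f (X ∪ Y) ≤ f X + f Y)
    (hδ : 0 < δ) (hS : 2 * δ ≤ f S) :
    ∃ T ⊆ S, δ ≤ f T ∧ ((∃ v ∈ S, T = {v}) ∨ T.ncard * f S ≤ 4 * δ * S.ncard) := by
  obtain ⟨T, ⟨hTS, hT⟩, hmin⟩ := (Set.toFinite {T | T ⊆ S ∧ δ ≤ f T}).exists_minimalFor Set.ncard _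
    ⟨S, le_rfl, by linarith⟩
  refine ⟨T, hTS, hT, or_iff_not_imp_left.2 fun hv => ?_⟩
  have hne : T.Nonempty := by
    by_contra! h
    rw [h, h₀] at hT
    exact hT.not_gt hδ
  have hcard : 2 ≤ T.ncard := by
    by_contra! h
    obtain ⟨v, rfl⟩ := Set.ncard_eq_one.1
      (le_antisymm (Nat.lt_succ_iff.1 h) ((Set.ncard_pos T.toFinite).2 hne))
    exact hv ⟨v, by simpa using hTS, rfl⟩
  have hbound := mul_le_of_forall_subset_ncard_le (S := S) (r := T.ncard - 1) hsub hδ.le (by omega)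
    fun T' hT' hc => by
      by_contra! h
      have := hmin ⟨hT', h.le⟩ (by omega)
      omega
  have hr : (T.ncard : ℝ) ≤ 2 * (T.ncard - 1 : ℕ) := by exact_mod_cast (by omega)
  nlinarith [(T.ncard - 1).cast_nonneg (α := ℝ)]

theorem Regime.exists_subset_le_and_ncard_le {n ρ : ℕ} {θ β : ℝ} (D : Regime n ρ θ δ β)
    (h₀ : f ∅ = 0) (hsub : ∀ X Y, f (X ∪ Y) ≤ f X + f Y) (hS : θ ≤ f S) :
    ∃ T ⊆ S, δ ≤ f T ∧ ((∃ v ∈ S, T = {v}) ∨ T.ncard ≤ β * S.ncard) := by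
  obtain ⟨T, hT, hTδ, hTcard⟩ := exists_subset_le_and_ncard_mul_le h₀ hsub D.δ_pos
    (by linarith [D.δ_le, D.δ_pos])
  refine ⟨T, hT, hTδ, hTcard.imp_right fun hTcard => le_of_mul_le_mul_right ?_ D.θ_pos⟩
  have hδβ : 4 * δ ≤ β * θ := by nlinarith [D.mul_δ_le, D.two_le_cast, D.δ_pos]
  calc (T.ncard : ℝ) * θ ≤ T.ncard * f S := by gcongr
    _ ≤ 4 * δ * S.ncard := hTcard
    _ ≤ β * θ * S.ncard := by gcongr
    _ = β * S.ncard * θ := by ring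

/- Otherwise small sets of large value could be pushed from one run of `k` consecutive indices to
the next, losing a factor `β` in size each time; after `ρ - 1` runs no vertex is left. -/
theorem exists_unbalanced_subset {ρ k : ℕ} {θ β σ : ℝ} (D : Regime (Nat.card V) ρ θ δ β)
    (hk : 0 < k) {f : ℕ → Set V → ℝ} (h₀ : ∀ t, f t ∅ = 0)
    (hsub : ∀ t X Y, f t (X ∪ Y) ≤ f t X + f t Y)
    (hsingle : ∀ t < ρ * k, ∀ v ∈ S, f t {v} ≤ θ) (hσ : 2 * θ < σ) (hS : σ ≤ f 0 S) :
    ∃ s ⊆ S, ∃ t₀ o, t₀ < o ∧ o + k ≤ ρ * k ∧ δ ≤ f t₀ s ∧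
      ∀ t, o ≤ t → t < o + k → f t s ≤ σ / 2 := by
  have hθ := D.θ_pos
  have hβ := D.β_pos
  by_contra! hbal
  have hpush : ∀ i < ρ, ∃ s ⊆ S, (s.ncard : ℝ) ≤ β ^ i * Nat.card V ∧
      ∃ t < (i + 1) * k, σ / 2 < f t s := fun i => by
    induction i with
    | zero =>
      refine fun _ => ⟨S, le_rfl, ?_, 0, by omega, by linarith⟩
      rw [pow_zero, one_mul]
      exact_mod_cast S.ncard_le_card
    | succ i ih =>
      intro hi
      obtain ⟨s, hs, hcard, t, ht, hst⟩ := ih (by omega)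
      have hik : (i + 1) * k + k ≤ ρ * k := by
        rw [← Nat.succ_mul]
        exact Nat.mul_le_mul_right k hi
      obtain ⟨T, hT, hTδ, hTcard⟩ :=
        D.exists_subset_le_and_ncard_le (S := s) (h₀ t) (hsub t) (by linarith)
      obtain ⟨t', -, ht'k, hTt'⟩ := hbal T (hT.trans hs) t _ ht hik hTδ
      refine ⟨T, hT.trans hs, ?_, t', by rwa [Nat.succ_mul], hTt'⟩
      obtain ⟨v, hv, rfl⟩ | hTcard := hTcard
      · linarith [hsingle t' (by omega) v (hs hv)]
      calc (T.ncard : ℝ) ≤ β * s.ncard := hTcard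
        _ ≤ β * (β ^ i * Nat.card V) := by gcongr
        _ = β ^ (i + 1) * Nat.card V := by ring
  obtain ⟨s, -, hcard, t, -, hst⟩ := hpush (ρ - 1) (by have := D.two_le; omega)
  have hs : s.ncard = 0 := by
    have : (s.ncard : ℝ) < 1 := hcard.trans_lt D.pow_mul_lt
    exact Nat.lt_one_iff.1 (by exact_mod_cast this)
  rw [(Set.ncard_eq_zero s.toFinite).1 hs, h₀] at hst
  linarith

end Unbalanced

section Iteration

variable [Finite V] {G : SimpleGraph V} {I : Finset ℤ} {A : ℤ → Set V} {θ δ β η σ : ℝ}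
  {ρ k h m : ℕ}

theorem HasBiLevelling.succ (S : NondivergentBlockade G I A θ δ) (D : Regime (Nat.card V) ρ θ δ β)
    (hk : 0 < k) (hσ : 2 * θ < σ) (H : HasBiLevelling G I A (ρ * k) h σ) :
    HasBiLevelling G I A k (h + 1) (σ / 2 - θ) := by
  obtain ⟨L, M, C, Y, a, b, q, rfl, H⟩ := H
  have hρk : 0 < ρ * k := Nat.mul_pos (by have := D.two_le; omega) hk
  have hright : .right b ∈ {p | Piece.IsIn a b (ρ * k) p} := ⟨H.one_le_right, le_rfl⟩
  have hblock (t : ℕ) (ht : t < ρ * k) : .block t ∈ {p | Piece.IsIn a b (ρ * k) p} := ht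
  obtain ⟨s, hs, t₀, o, ht₀, hok, hδs, hbalanced⟩ := exists_unbalanced_subset D hk
    (S := M b) (σ := σ) (f := fun t X => density (A (q (.block t))) (nbhd G X ∩ C t))
    (fun t => by simp [nbhd_empty, density_empty])
    (fun t X Y => by
      simp only [nbhd_union, Set.union_inter_distrib_right]
      exact density_union_le)
    (fun t ht v hv => (density_mono Set.inter_subset_left).trans <|
      S.density_nbhd_singleton_le (H.rainbow.1 _ hright).1 (H.rainbow.1 _ (hblock t ht)).1
        (H.rainbow.2.ne hright (hblock t ht) (by simp)) ((H.rainbow.1 _ hright).2 hv))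
    hσ (by
      rw [Set.inter_eq_right.2 (covers_iff_subset_nbhd.1 (H.right_covers 0 hρk))]
      exact H.le_density 0 hρk)
  refine H.hasBiLevelling_succ hs ht₀ (by omega) hok fun t ht => ?_
  have ht₀N := hblock t₀ (by omega)
  have htN := hblock (o + t) (by omega)
  have hX := S.density_sub_lt_density_nbhd_inter (X := nbhd G s ∩ C t₀) (H.rainbow.1 _ ht₀N).1
    (H.rainbow.1 _ htN).1 (H.rainbow.2.ne ht₀N htN (by simp; omega))
    (Set.inter_subset_right.trans (H.rainbow.1 _ ht₀N).2) hδs (C (o + t))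
  have hsplit := density_inter_add_diff (B := A (q (.block (o + t))))
    (X := C (o + t) ∩ nbhd G (nbhd G s ∩ C t₀)) (Y := nbhd G s)
  have hmeet := (density_mono (B := A (q (.block (o + t)))) (by grind :
    C (o + t) ∩ nbhd G (nbhd G s ∩ C t₀) ∩ nbhd G s ⊆ nbhd G s ∩ C (o + t))).trans
    (hbalanced (o + t) (by omega) (by omega))
  rw [Set.inter_comm] at hX
  linarith [H.le_density (o + t) (by omega)]

theorem HasBiLevelling.add (S : NondivergentBlockade G I A θ δ) (D : Regime (Nat.card V) ρ θ δ β)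
    (hk : 0 < k) (hη : 2 * θ < η)
    (H : HasBiLevelling G I A (k * ρ ^ m) h (2 ^ m * (η + 2 * θ) - 2 * θ)) :
    HasBiLevelling G I A k (h + m) η := by
  have hθ := D.θ_pos
  induction m generalizing h with
  | zero => simpa using H
  | succ m ih =>
    have hpow : (2 : ℝ) ≤ 2 ^ (m + 1) := le_self_pow₀ (by norm_num) (by omega)
    rw [pow_succ, mul_comm _ ρ, mul_left_comm] at H
    have hstep := H.succ S D (Nat.mul_pos hk (pow_pos (by have := D.two_le; omega) m))
      (by nlinarith)
    rw [show (2 ^ (m + 1) * (η + 2 * θ) - 2 * θ) / 2 - θ = 2 ^ m * (η + 2 * θ) - 2 * θ by ring]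
      at hstep
    exact (add_right_comm h 1 m).trans (add_assoc h m 1) ▸ ih hstep

end Iteration

section Seeds

/-- The raw material for a bi-levelling: layerings `M` (of height `H`) and `F` (of height `l`) with
a common root, in which `M` starts as the path `z 0, …, z s` and has no edges to `F` from the end of
that path on. The label set `J` is kept free for the blocks; `F` reaches a quarter of each of these,
and the top of `M` is large enough to reach nearly all of them. -/
structure Seed (G : SimpleGraph V) (I : Finset ℤ) (A : ℤ → Set V) (δ : ℝ) (ρ : ℕ) (J : Finset ℤ)
    (z : ℕ → V) (M F : ℕ → Set V) (s H l : ℕ) (q : Piece → ℤ) : Prop where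
  one_le : 1 ≤ s
  s_lt : s < ρ
  l_lt : l < ρ
  H_lt : H < s + ρ
  path : ∀ t ≤ s, M t = {z t}
  root : F 0 = {z 0}
  left : Layered G M H
  right : Layered G F l
  anticomplete : ∀ t ≤ l, ∀ y, s ≤ y → y ≤ H → Anticomplete G (F t) (M y)
  rainbow : IsRainbow I A {p | p.IsIn H l 0} (Piece.elim M F ⊥) q
  subset : J ⊆ I
  label_notMem : ∀ p : Piece, p.IsIn H l 0 → q p ∉ J
  s_lt_H : s < H
  le_density_top : δ ≤ density (A (q (.left H))) (M H)
  le_density_nbhd : ∀ j ∈ J, 1 / 4 ≤ density (A j) (nbhd G (Set.accumulate F l))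

/-- A transversal `f` of `F 0, …, F (i + r)` whose last contact with the path `z 0, …, z (s - 1)` is
the edge between `f i` and `z x`: no later vertex of `f` has a neighbour on this path, and `f i` has
none after `z x`. -/
structure ContactChain (G : SimpleGraph V) (F : ℕ → Set V) (z : ℕ → V) (s i r x : ℕ)
    (f : ℕ → V) : Prop where
  mem : ∀ t ≤ i + r, f t ∈ F t
  adj : ∀ t < i + r, G.Adj (f t) (f (t + 1))
  contact : G.Adj (f i) (z x)
  not_adj_of_lt : ∀ t, i < t → t ≤ i + r → ∀ y < s, ¬ G.Adj (f t) (z y)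
  not_adj_of_gt : ∀ y, x < y → y < s → ¬ G.Adj (f i) (z y)

/-- The levels `{z x}, {f i}, {f (i + 1)}, …`, where `f` ranges over the chains with last contact
`(i, x)`. -/
def contactLevels (G : SimpleGraph V) (F : ℕ → Set V) (z : ℕ → V) (s i r x : ℕ) : ℕ → Set V
  | 0 => {z x}
  | t + 1 => {v | ∃ f, ContactChain G F z s i r x f ∧ f (i + t) = v}

/-- The vertices off the neighbourhood of the path that can be reached both from the contact levels
and from the level `s + m` of `M`, and from no earlier level of `F` or `M`. -/
def contactCell (G : SimpleGraph V) (M F : ℕ → Set V) (z : ℕ → V) (s i r x m : ℕ) : Set V :=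
  (nbhd G (contactLevels G F z s i r x (r + 1)) ∩ firstNbhd G F (i + r) ∩ firstNbhd G M (s + m)) \
    ⋃ y ∈ Finset.range (s + 1), nbhd G {z y}

variable {G : SimpleGraph V} {I J : Finset ℤ} {A : ℤ → Set V} {δ θ β η : ℝ} {ρ : ℕ} {z : ℕ → V}
  {M F L C : ℕ → Set V} {s H l i r x m t n a b : ℕ} {q : Piece → ℤ}

theorem IsRainbow.addBlocks {c : ℕ → ℤ}
    (hq : IsRainbow I A {p | p.IsIn a b 0} (Piece.elim L M C) q)
    (hc : ∀ t < n, c t ∈ I ∧ C t ⊆ A (c t)) (hinj : Set.InjOn c (Set.Iio n))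
    (hne : ∀ p : Piece, p.IsIn a b 0 → ∀ t < n, q p ≠ c t) :
    IsRainbow I A {p | p.IsIn a b n} (Piece.elim L M C)
      (Piece.elim (q ∘ .left) (q ∘ .right) c) := by
  refine ⟨?_, ?_⟩
  · rintro (i | i | t) hp
    exacts [hq.1 (.left i) hp, hq.1 (.right i) hp, hc t hp]
  · rintro (i | i | t) hp (j | j | u) hp' h
    exacts [hq.2 hp hp' h, hq.2 hp hp' h, (hne (.left i) hp u hp' h).elim, hq.2 hp hp' h,
      hq.2 hp hp' h, (hne (.right i) hp u hp' h).elim, (hne (.left j) hp' t hp h.symm).elim,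
      (hne (.right j) hp' t hp h.symm).elim, congrArg Piece.block (hinj hp hp' h)]

section Contacts

theorem exists_last_contact {f : ℕ → V} (ha : 1 ≤ a) (hs : 1 ≤ s) (h : G.Adj (f 1) (z 0)) :
    ∃ i x, 1 ≤ i ∧ i ≤ a ∧ x < s ∧ G.Adj (f i) (z x) ∧
      (∀ t, i < t → t ≤ a → ∀ y < s, ¬ G.Adj (f t) (z y)) ∧
      ∀ y, x < y → y < s → ¬ G.Adj (f i) (z y) := by
  classical
  have hex : ∃ y < s, G.Adj (f 1) (z y) := ⟨0, hs, h⟩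
  obtain ⟨y, hy, hiy⟩ := Nat.findGreatest_spec (P := fun t => ∃ y < s, G.Adj (f t) (z y)) ha hex
  have hspec := Nat.findGreatest_spec (P := fun y => y < s ∧ G.Adj _ (z y)) hy.le ⟨hy, hiy⟩
  exact ⟨_, _, Nat.le_findGreatest ha hex, Nat.findGreatest_le a, hspec.1, hspec.2,
    fun t ht hta y hy hadj => Nat.findGreatest_is_greatest ht hta ⟨y, hy, hadj⟩,
    fun y hxy hys hadj => Nat.findGreatest_is_greatest hxy hys.le ⟨hys, hadj⟩⟩

theorem Layered.exists_contactChain (hF : Layered G F l) (h₀ : F 0 = {z 0}) (hs : 1 ≤ s)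
    (ha : 1 ≤ a) (hal : a ≤ l) {v : V} (hv : v ∈ F a) :
    ∃ i r x f, 1 ≤ i ∧ i + r = a ∧ x < s ∧ ContactChain G F z s i r x f ∧ f a = v := by
  obtain ⟨f, hfa, hfF, hadj⟩ := hF.exists_transversal hal hv
  have hf₀ : f 0 = z 0 := by simpa [h₀] using hfF 0 (by omega)
  obtain ⟨i, x, hi, hia, hx, hix, hlt, hgt⟩ :=
    exists_last_contact (G := G) ha hs (hf₀ ▸ (hadj 0 ha).symm)
  obtain ⟨r, rfl⟩ := Nat.exists_eq_add_of_le hia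
  exact ⟨i, r, x, f, hi, rfl, hx, ⟨hfF, hadj, hix, hlt, hgt⟩, hfa⟩

theorem contactLevels_subset (ht : t ≤ r) :
    contactLevels G F z s i r x (t + 1) ⊆ F (i + t) := by
  rintro _ ⟨f, hf, rfl⟩
  exact hf.mem _ (by omega)

theorem anticomplete_contactLevels (ht : t ≤ r) {y : ℕ} (hxy : x < y) (hy : y < s) :
    Anticomplete G {z y} (contactLevels G F z s i r x (t + 1)) := by
  rintro _ rfl _ ⟨f, hf, rfl⟩ hadj
  obtain rfl | ht₀ := Nat.eq_zero_or_pos t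
  · exact hf.not_adj_of_gt y hxy hy hadj.symm
  · exact hf.not_adj_of_lt (i + t) (by omega) (by omega) y hy hadj.symm

theorem Layered.contactLevels (hF : Layered G F l) (hl : i + r ≤ l) (hx : x < s) :
    Layered G (contactLevels G F z s i r x) (r + 1) where
  covers t ht := by
    rintro _ ⟨f, hf, rfl⟩
    cases t with
    | zero => exact ⟨z x, rfl, hf.contact.symm⟩
    | succ t => exact ⟨f (i + t), ⟨f, hf, rfl⟩, hf.adj (i + t) (by omega)⟩
  anticomplete u t hut ht := by
    obtain ⟨t, rfl⟩ := Nat.exists_eq_add_of_le' (show 1 ≤ t by omega)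
    cases u with
    | zero =>
      rintro _ rfl _ ⟨f, hf, rfl⟩ hadj
      exact hf.not_adj_of_lt (i + t) (by omega) (by omega) x hx hadj.symm
    | succ u =>
      exact (hF.anticomplete (i + u) (i + t) (by omega) (by omega)).mono
        (contactLevels_subset (by omega)) (contactLevels_subset (by omega))

end Contacts

namespace Seed

/-- The piece of a seed that becomes a given piece of the bi-levelling with contact `(i, x)`. -/
def source (i x : ℕ) : Piece → Piece
  | .left 0 => .left x
  | .left (t + 1) => .right (i + t)
  | .right t => .left (x + t)
  | .block t => .block t

theorem injOn_source : Set.InjOn (source i x) {p | p.IsIn a b n} := by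
  rintro ((_ | t) | t | t) hp ((_ | u) | u | u) hp' h <;> grind [source, Piece.IsIn]

theorem mapsTo_source (hi : 1 ≤ i) (hl : i + r ≤ l) (hx : x + b ≤ H) :
    Set.MapsTo (source i x) {p | p.IsIn (r + 1) b n} {p | p.IsIn H l n} := by
  rintro ((_ | t) | t | t) hp <;> grind [source, Piece.IsIn]

theorem rainbow_source (W : Seed G I A δ ρ J z M F s H l q) (hi : 1 ≤ i) (hl : i + r ≤ l)
    (hx : x < s) (hxb : x + b ≤ H) :
    IsRainbow I A {p | p.IsIn (r + 1) b 0}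
      (Piece.elim (contactLevels G F z s i r x) (fun t => M (x + t)) C) (q ∘ source i x) :=
  W.rainbow.comp injOn_source (mapsTo_source hi hl hxb) <| by
    rintro ((_ | t) | t | t) hp
    · exact (W.path x hx.le).ge
    · exact contactLevels_subset (Nat.succ_le_succ_iff.1 hp)
    · exact le_rfl
    · exact absurd hp t.not_lt_zero

theorem anticomplete_path_cell {y : ℕ} (hy : y ≤ s) :
    Anticomplete G {z y} (contactCell G M F z s i r x m) := by
  rintro v hv d hd hadj
  exact hd.2 (Set.mem_biUnion (Finset.mem_coe.2 (Finset.mem_range.2 (Nat.lt_succ_of_le hy)))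
    ⟨v, hv, hadj⟩)

theorem parallel (W : Seed G I A δ ρ J z M F s H l q) (hl : i + r ≤ l)
    (ht : t ≤ r) {u : ℕ} (hu : 1 ≤ u) (huH : x + u ≤ H) :
    Anticomplete G (M (x + u)) (contactLevels G F z s i r x (t + 1)) := by
  obtain hlt | hge := Nat.lt_or_ge (x + u) s
  · rw [W.path _ hlt.le]
    exact anticomplete_contactLevels ht (by omega) hlt
  · exact ((W.anticomplete (i + t) (by omega) (x + u) hge huH).mono
      (contactLevels_subset ht) le_rfl).symm

theorem subset_biUnion_contactCell (W : Seed G I A δ ρ J z M F s H l q) :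
    (nbhd G (Set.accumulate F l) ∩ nbhd G (M H)) \ (⋃ y ∈ Finset.range (s + 1), nbhd G {z y}) ⊆
      ⋃ τ ∈ {τ ∈ Finset.range ρ ×ˢ Finset.range ρ ×ˢ Finset.range ρ ×ˢ Finset.range ρ |
        1 ≤ τ.1 ∧ τ.1 + τ.2.1 ≤ l ∧ τ.2.2.1 < s ∧ 1 ≤ τ.2.2.2 ∧ s + τ.2.2.2 ≤ H},
        contactCell G M F z s τ.1 τ.2.1 τ.2.2.1 τ.2.2.2 := by
  have hl := W.l_lt
  have hs := W.s_lt
  have hH := W.H_lt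
  rintro d ⟨⟨hdF, hdM⟩, hdz⟩
  have hoff : ∀ y ≤ s, d ∉ nbhd G {z y} := fun y hy h =>
    hdz (Set.mem_biUnion (Finset.mem_coe.2 (Finset.mem_range.2 (Nat.lt_succ_of_le hy))) h)
  obtain ⟨a, hal, hda⟩ := Set.mem_iUnion₂.1 (nbhd_accumulate_subset G F l hdF)
  obtain ⟨m', hmH, hdm⟩ := Set.mem_iUnion₂.1
    (nbhd_accumulate_subset G M H (nbhd_mono Set.subset_accumulate hdM))
  rw [Finset.mem_range] at hal hmH
  have ha : 1 ≤ a := Nat.one_le_iff_ne_zero.2 fun h => hoff 0 (by omega) (W.root ▸ h ▸ hda.1)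
  have hsm : s < m' := by
    by_contra! h
    exact hoff m' h (W.path m' h ▸ hdm.1)
  obtain ⟨m, rfl⟩ := Nat.exists_eq_add_of_le hsm.le
  obtain ⟨v, hv, hvd⟩ := hda.1
  obtain ⟨i, r, x, f, hi, rfl, hx, hf, rfl⟩ :=
    W.right.exists_contactChain W.root W.one_le ha (by omega) hv
  refine Set.mem_biUnion (x := (i, r, x, m)) ?_ ⟨⟨⟨⟨_, ⟨f, hf, rfl⟩, hvd⟩, hda⟩, hdm⟩, hdz⟩
  simp only [Finset.coe_filter, Finset.mem_product, Finset.mem_range, Set.mem_ofPred_eq]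
  omega

theorem orderedBiLevelling (W : Seed G I A δ ρ J z M F s H l q) (hi : 1 ≤ i) (hl : i + r ≤ l)
    (hx : x < s) (hb : 1 ≤ b) (hxb : x + b = s + m) (hm : s + m ≤ H) {c : ℕ → ℤ} {Y : ℕ → Set V}
    (hgr : IsGrading G (contactLevels G F z s i r x (r + 1)) n C Y)
    (hc : ∀ t < n, c t ∈ J) (hinj : Set.InjOn c (Set.Iio n))
    (hcell : ∀ t < n, C t ⊆ contactCell G M F z s i r x m) (hCA : ∀ t < n, C t ⊆ A (c t))
    (hη : ∀ t < n, η ≤ density (A (c t)) (C t)) :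
    OrderedBiLevelling G I A (contactLevels G F z s i r x) (fun t => M (x + t)) C Y (r + 1) b n η
      (Piece.elim (q ∘ source i x ∘ .left) (q ∘ source i x ∘ .right) c) where
  one_le_left := by omega
  one_le_right := hb
  root_eq := (W.path x hx.le).symm
  root_ncard := Set.ncard_singleton _
  rainbow := (W.rainbow_source hi hl hx (by omega)).addBlocks
    (fun t ht => ⟨W.subset (hc t ht), hCA t ht⟩) hinj fun p hp t ht h =>
      W.label_notMem _ (mapsTo_source hi hl (b := b) (by omega) hp)
        (show (q ∘ source i x) p ∈ J from h ▸ hc t ht)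
  left := W.right.contactLevels hl hx
  right := (W.left.mono (by omega : x + b ≤ H)).shift
  parallel := fun u hu hub t ht htr => by
    obtain ⟨t, rfl⟩ := Nat.exists_eq_add_of_le' ht
    exact W.parallel hl (by omega) hu (by omega)
  left_anticomplete := fun u hu t ht => by
    cases u with
    | zero => exact (anticomplete_path_cell hx.le).mono le_rfl (hcell t ht)
    | succ u =>
      exact (anticomplete_firstNbhd (show i + u < i + r by omega)).mono
        (contactLevels_subset (by omega)) ((hcell t ht).trans fun _ hd => hd.1.1.2)
  right_anticomplete := fun u hu t ht =>
    (anticomplete_firstNbhd (show x + u < s + m by omega)).mono le_rfl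
      ((hcell t ht).trans fun _ hd => hd.1.2)
  right_covers := fun t ht => by
    rw [hxb]
    exact covers_firstNbhd.mono le_rfl ((hcell t ht).trans fun _ hd => hd.1.2)
  grading := hgr
  le_density := hη

variable [Finite V]

theorem hasBiLevelling_of_cell (S : NondivergentBlockade G I A θ δ) (hθ : 0 ≤ θ)
    (W : Seed G I A δ ρ J z M F s H l q) (hi : 1 ≤ i) (hl : i + r ≤ l) (hx : x < s)
    (hb : 1 ≤ b) (hxb : x + b = s + m) (hm : s + m ≤ H) {J' : Finset ℤ} (hJ' : J' ⊆ J)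
    (hη : 0 < η) (hn : n ≤ J'.card)
    (hdens : ∀ j ∈ J', n * (η + θ) ≤ density (A j) (contactCell G M F z s i r x m)) :
    HasBiLevelling G I A n (r + 1 + b) η := by
  have hF : Piece.right (i + r) ∈ {p | Piece.IsIn H l 0 p} := ⟨by omega, hl⟩
  have hΛ : contactLevels G F z s i r x (r + 1) ⊆ F (i + r) := contactLevels_subset le_rfl
  obtain ⟨c, C, Y, hgr, hC, hinj⟩ := exists_isGrading (A := A) (J := J')
    (D := fun j => contactCell G M F z s i r x m ∩ A j) hη hθ (fun j _ d hd => hd.1.1.1.1)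
    (fun j hj v hv => S.density_nbhd_singleton_le (W.rainbow.1 _ hF).1 (W.subset (hJ' hj))
      (fun h => W.label_notMem (.right (i + r)) hF (h ▸ hJ' hj)) ((W.rainbow.1 _ hF).2 (hΛ hv)))
    (fun j hj => (hdens j hj).trans (density_mono_of_inter_subset le_rfl)) hn
  exact ⟨_, _, C, Y, r + 1, b, _, rfl, W.orderedBiLevelling hi hl hx hb hxb hm hgr
    (fun t ht => hJ' (hC t ht).1) hinj (fun t ht => (hC t ht).2.1.trans Set.inter_subset_left)
    (fun t ht => (hC t ht).2.1.trans Set.inter_subset_right) fun t ht => (hC t ht).2.2⟩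

theorem le_density_reach (S : NondivergentBlockade G I A θ δ)
    (D : Regime (Nat.card V) ρ θ δ β) (W : Seed G I A δ ρ J z M F s H l q) {j : ℤ} (hj : j ∈ J) :
    1 / 8 ≤ density (A j) ((nbhd G (Set.accumulate F l) ∩ nbhd G (M H)) \
      ⋃ y ∈ Finset.range (s + 1), nbhd G {z y}) := by
  have hθ := D.θ_pos
  have hne {p : Piece} (hp : p.IsIn H l 0) : q p ≠ j := fun h => W.label_notMem p hp (h ▸ hj)
  have hmem (t : ℕ) (ht : t ≤ H) : .left t ∈ {p | Piece.IsIn H l 0 p} := ht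
  have hpath : density (A j) (⋃ y ∈ Finset.range (s + 1), nbhd G {z y}) ≤ ρ * θ := by
    calc density (A j) (⋃ y ∈ Finset.range (s + 1), nbhd G {z y})
        ≤ ∑ y ∈ Finset.range (s + 1), density (A j) (nbhd G {z y}) := density_biUnion_le _ _
      _ ≤ (Finset.range (s + 1)).card • θ := by
          refine Finset.sum_le_card_nsmul _ _ _ fun y hy => ?_
          have hys : y ≤ s := Nat.lt_succ_iff.1 (Finset.mem_range.1 hy)
          have hyH := hmem y (hys.trans W.s_lt_H.le)
          refine S.density_nbhd_singleton_le (W.rainbow.1 _ hyH).1 (W.subset hj) (hne hyH)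
            ((W.rainbow.1 _ hyH).2 ?_)
          exact (W.path y hys).ge rfl
      _ ≤ ρ * θ := by
          rw [Finset.card_range, nsmul_eq_mul]
          gcongr
          exact W.s_lt
  have htop := S.density_sub_lt_density_nbhd_inter (W.rainbow.1 _ (hmem H le_rfl)).1 (W.subset hj)
    (hne (hmem H le_rfl)) (W.rainbow.1 _ (hmem H le_rfl)).2 W.le_density_top
    (X := M H) (nbhd G (Set.accumulate F l))
  rw [Set.inter_comm] at htop
  have hsplit := density_inter_add_diff (B := A j) (X := nbhd G (Set.accumulate F l) ∩ nbhd G (M H))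
    (Y := ⋃ y ∈ Finset.range (s + 1), nbhd G {z y})
  have hinter := (density_mono (B := A j) (Set.inter_subset_right
    (s := nbhd G (Set.accumulate F l) ∩ nbhd G (M H)))).trans hpath
  linarith [W.le_density_nbhd j hj, D.mul_ρ_θ_le, D.θ_le]

theorem exists_hasBiLevelling (S : NondivergentBlockade G I A θ δ)
    (D : Regime (Nat.card V) ρ θ δ β) (W : Seed G I A δ ρ J z M F s H l q) (hJ : J.Nonempty) :
    ∃ h, 3 ≤ h ∧ h ≤ l + H ∧ ∀ (n : ℕ) (η : ℝ), 0 < η → n * ρ ^ 4 ≤ J.card →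
      n * (η + θ) ≤ 1 / (8 * (ρ : ℝ) ^ 4) → HasBiLevelling G I A n h η := by
  obtain ⟨⟨i, r, x, m⟩, hτ, J', hJ', hcard, hdens⟩ := exists_common_cell hJ (N := ρ ^ 4)
    ((Finset.card_filter_le _ _).trans_eq (by
      simp only [Finset.card_product, Finset.card_range]
      ring))
    W.subset_biUnion_contactCell (by norm_num) fun j hj => W.le_density_reach S D hj
  simp only [Finset.mem_filter] at hτ
  obtain ⟨-, hi, hl, hx, hm, hmH⟩ := hτ
  obtain ⟨b, hb⟩ := Nat.exists_eq_add_of_le (show x ≤ s + m by omega)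
  refine ⟨r + 1 + b, by omega, by omega, fun n η hη hn hnη => ?_⟩
  refine W.hasBiLevelling_of_cell S D.θ_pos.le hi hl hx (by omega) hb.symm hmH hJ' hη ?_
    fun j hj => ?_
  · have hρ : 0 < ρ ^ 4 := pow_pos (by have := D.two_le; omega) 4
    exact Nat.le_of_mul_le_mul_left (((mul_comm _ _).trans_le hn).trans hcard) hρ
  · refine hnη.trans (le_trans (le_of_eq ?_) (hdens j hj))
    push_cast
    rw [div_div]

end Seed

end Seeds

section Sources

/-- The sequence `f 0, …, f (s - 1), g 0, g 1, …`. -/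
def concat {α : Type*} (s : ℕ) (f g : ℕ → α) (t : ℕ) : α := if t < s then f t else g (t - s)

section Concat

variable {α : Type*} {f g : ℕ → α} {s t : ℕ}

theorem concat_of_lt (h : t < s) : concat s f g t = f t := if_pos h

theorem concat_add : concat s f g (s + t) = g t := by simp [concat]

theorem concat_self : concat s f g s = g 0 := concat_add (t := 0)

end Concat

variable {G : SimpleGraph V} {I J T : Finset ℤ} {A E : ℤ → Set V} {δ θ β : ℝ} {ρ : ℕ} {i₀ j : ℤ}
  {v w : V} {h h' l t : ℕ} {q q' : ℕ → ℤ} {R R' : ℕ → Set V} {U : Set V} {f : ℕ → V}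

theorem Layered.concat (H : Layered G R h) (H' : Layered G R' h') (hcov : Covers G (R h) (R' 0))
    (h₀ : ∀ t < h, Anticomplete G (R t) (R' 0))
    (hanti : ∀ t ≤ h, ∀ u, 1 ≤ u → u ≤ h' → Anticomplete G (R t) (R' u)) :
    Layered G (concat (h + 1) R R') (h + 1 + h') where
  covers t ht := by
    obtain hlt | rfl | hgt := Nat.lt_trichotomy t h
    · rw [concat_of_lt (by omega), concat_of_lt (by omega)]
      exact H.covers t hlt
    · rw [concat_of_lt (by omega)]
      rwa [concat_self]
    · obtain ⟨u, rfl⟩ := Nat.exists_eq_add_of_le (show h + 1 ≤ t from hgt)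
      rw [concat_add, add_assoc (h + 1), concat_add]
      exact H'.covers u (by omega)
  anticomplete s t hst ht := by
    obtain hlt | hge := Nat.lt_or_ge t (h + 1)
    · rw [concat_of_lt (by omega), concat_of_lt hlt]
      exact H.anticomplete s t hst (by omega)
    obtain ⟨u, rfl⟩ := Nat.exists_eq_add_of_le hge
    rw [concat_add]
    obtain hlt | hge' := Nat.lt_or_ge s (h + 1)
    · rw [concat_of_lt hlt]
      cases u with
      | zero => exact h₀ s (by omega)
      | succ u => exact hanti s (by omega) _ (by omega) (by omega)
    · obtain ⟨s, rfl⟩ := Nat.exists_eq_add_of_le hge'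
      rw [concat_add]
      exact H'.anticomplete s u (by omega) (by omega)

theorem Layered.of_transversal (H : Layered G R h) (hf : ∀ t ≤ h, f t ∈ R t)
    (hadj : ∀ t < h, G.Adj (f t) (f (t + 1))) : Layered G (fun t => {f t}) h where
  covers t ht := by
    rintro _ rfl
    exact ⟨f t, rfl, hadj t ht⟩
  anticomplete s t hst ht := (H.anticomplete s t hst ht).mono
    (Set.singleton_subset_iff.2 (hf s (by omega))) (Set.singleton_subset_iff.2 (hf t ht))

theorem IsRainbow.concat {s : ℕ} (H : IsRainbow I A (Set.Iio s) R q)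
    (H' : IsRainbow I A (Set.Iic h) R' q') (hne : ∀ t < s, ∀ u ≤ h, q t ≠ q' u) :
    IsRainbow I A (Set.Iic (s + h)) (concat s R R') (concat s q q') := by
  have hcases {t : ℕ} (ht : t ∈ Set.Iic (s + h)) : t < s ∨ ∃ u ≤ h, t = s + u := by
    obtain hlt | hge := Nat.lt_or_ge t s
    exacts [.inl hlt, .inr ⟨t - s, Nat.sub_le_iff_le_add'.2 ht, (Nat.add_sub_of_le hge).symm⟩]
  refine ⟨fun t ht => ?_, fun t ht t' ht' h => ?_⟩
  · obtain hlt | ⟨u, hu, rfl⟩ := hcases ht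
    · simpa only [concat_of_lt hlt] using H.1 t hlt
    · simpa only [concat_add] using H'.1 u hu
  · obtain hlt | ⟨u, hu, rfl⟩ := hcases ht <;> obtain hlt' | ⟨u', hu', rfl⟩ := hcases ht'
    · rw [concat_of_lt hlt, concat_of_lt hlt'] at h
      exact H.2 hlt hlt' h
    · rw [concat_of_lt hlt, concat_add] at h
      exact (hne _ hlt _ hu' h).elim
    · rw [concat_of_lt hlt', concat_add] at h
      exact (hne _ hlt' _ hu h.symm).elim
    · rw [concat_add, concat_add] at h
      exact congrArg (s + ·) (H'.2 hu hu' h)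

namespace RainbowGrowth

theorem mem_insert (H : RainbowGrowth G i₀ T E w h q R) (ht : t ≤ h) : q t ∈ insert i₀ T :=
  (H.rainbow.1 t ht).1

theorem layer_subset (H : RainbowGrowth G i₀ T E w h q R) (ht : t ≤ h) : R t ⊆ E (q t) :=
  (H.rainbow.1 t ht).2

theorem mem_of_pos (H : RainbowGrowth G i₀ T E w h q R) (ht : t ≤ h) (h₀ : 1 ≤ t) : q t ∈ T :=
  (Finset.mem_insert.1 (H.mem_insert ht)).resolve_left fun h =>
    (Nat.one_le_iff_ne_zero.1 h₀) (H.rainbow.2 ht (Nat.zero_le _) (h.trans H.label_zero.symm))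

/- The path `f 0, …, f t` replaces the first layers, so that what follows need only avoid the
neighbourhoods of the layers of `H`. -/
theorem concat {T' : Finset ℤ} {i' : ℤ} (H : RainbowGrowth G i₀ T A v l q R) (ht : t ≤ l)
    (hf : ∀ x ≤ t, f x ∈ R x) (hadj : ∀ x < t, G.Adj (f x) (f (x + 1))) (hw : G.Adj (f t) w)
    (hw' : w ∈ firstNbhd G R t) (H' : RainbowGrowth G i' T' E w h' q' R')
    (hE : ∀ j ∈ insert i' T', E j ⊆ A j)
    (hanti : ∀ j ∈ T', ∀ x ≤ l, Anticomplete G (R x) (E j))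
    (hdisj : Disjoint (insert i₀ T) (insert i' T')) :
    RainbowGrowth G i₀ (T ∪ insert i' T') A v (t + 1 + h') (PurePairs.concat (t + 1) q q')
      (PurePairs.concat (t + 1) (fun x => {f x}) R') where
  root := by
    have h₀ : f 0 = v := by simpa [H.root] using hf 0 (Nat.zero_le _)
    rw [concat_of_lt (by omega), h₀]
  label_zero := by rw [concat_of_lt (by omega), H.label_zero]
  rainbow := by
    rw [← Finset.insert_union]
    refine IsRainbow.concat ⟨fun x hx => ?_, H.rainbow.2.mono fun x hx => ?_⟩
      (H'.rainbow.mono Finset.subset_union_right hE) fun x hx y hy h => ?_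
    · have hxt : x ≤ t := Nat.lt_succ_iff.1 hx
      exact ⟨Finset.mem_union_left _ (H.mem_insert (hxt.trans ht)),
        Set.singleton_subset_iff.2 (H.layer_subset (hxt.trans ht) (hf x hxt))⟩
    · exact (Nat.lt_succ_iff.1 hx).trans ht
    · exact Finset.disjoint_left.1 hdisj (H.mem_insert ((Nat.lt_succ_iff.1 hx).trans ht))
        (h ▸ H'.mem_insert hy)
  layered := by
    refine ((H.layered.mono ht).of_transversal hf hadj).concat H'.layered ?_ ?_ ?_
    · rw [H'.root]
      rintro _ rfl
      exact ⟨_, rfl, hw⟩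
    · rw [H'.root]
      exact fun x hx => (anticomplete_firstNbhd hx).mono
        (Set.singleton_subset_iff.2 (hf x hx.le)) (Set.singleton_subset_iff.2 hw')
    · exact fun x hx u hu hu' => (hanti _ (H'.mem_of_pos hu' hu) x (hx.trans ht)).mono
        (Set.singleton_subset_iff.2 (hf x hx)) (H'.layer_subset hu')

variable [Finite V]

theorem density_nbhd_singleton_le (S : NondivergentBlockade G I A θ δ)
    (H : RainbowGrowth G i₀ T A w h q R) (hT : insert i₀ T ⊆ I) (hj : j ∈ I \ insert i₀ T)
    (ht : t ≤ h) (hv : v ∈ R t) : density (A j) (nbhd G {v}) ≤ θ :=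
  S.density_nbhd_singleton_le (hT (H.mem_insert ht)) (Finset.mem_sdiff.1 hj).1
    (fun h => (Finset.mem_sdiff.1 hj).2 (h ▸ H.mem_insert ht)) (H.layer_subset ht hv)

theorem density_sub_lt (S : NondivergentBlockade G I A θ δ)
    (H : RainbowGrowth G i₀ T A w h q R) (hT : insert i₀ T ⊆ I)
    (hR : δ ≤ density (A (q h)) (R h)) (hj : j ∈ I \ insert i₀ T) (U : Set V) :
    density (A j) U - θ < density (A j) (nbhd G (Set.accumulate R h) ∩ U) :=
  (S.density_sub_lt_density_nbhd_inter (hT (H.mem_insert le_rfl)) (Finset.mem_sdiff.1 hj).1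
    (fun h => (Finset.mem_sdiff.1 hj).2 (h ▸ H.mem_insert le_rfl)) (H.layer_subset le_rfl) hR
    U).trans_le (density_mono (Set.inter_subset_inter_left _ (nbhd_mono Set.subset_accumulate)))

theorem exists_first_time {P : Set V → Prop} (S : NondivergentBlockade G I A θ δ)
    (H : RainbowGrowth G i₀ T A w h q R) (hT : insert i₀ T ⊆ I) (h₀ : ¬ P {w})
    (hP : P (Set.accumulate R h)) :
    ∃ l ≤ h, ∃ Q B, RainbowGrowth G i₀ T A w l q Q ∧ ¬ P B ∧ P (Set.accumulate Q l) ∧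
      ∀ j ∈ I \ insert i₀ T, ∀ U, density (A j) (nbhd G (Set.accumulate Q l) ∩ U) ≤
        density (A j) (nbhd G B ∩ U) + θ := by
  obtain ⟨l, hl, X, hX, y, hy, hnP, hPy⟩ := exists_accumulate_first_time (H.root ▸ h₀) hP
  have hyX : insert y X ⊆ R (l + 1) := Set.insert_subset hy hX
  rw [← accumulate_update_succ] at hPy
  refine ⟨l + 1, hl, Function.update R (l + 1) (insert y X), Set.accumulate R l ∪ X, ?_, hnP, hPy,
    fun j hj U => ?_⟩
  · refine ⟨by simpa using H.root, H.label_zero, ⟨fun t ht => ⟨H.mem_insert (ht.trans hl), ?_⟩,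
      H.rainbow.2.mono (Set.Iic_subset_Iic.2 hl)⟩, (H.layered.mono hl).update_top hyX⟩
    refine le_trans ?_ (H.layer_subset (ht.trans hl))
    obtain rfl | hne := eq_or_ne t (l + 1)
    · simpa using hyX
    · rw [Function.update_of_ne hne]
  · rw [accumulate_update_succ, Set.union_insert, Set.insert_eq, nbhd_union,
      Set.union_inter_distrib_right]
    refine density_union_le.trans ?_
    linarith [(density_mono (Set.inter_subset_left (t := U))).trans
      (H.density_nbhd_singleton_le S hT hj hl hy)]

theorem exists_balanced (S : NondivergentBlockade G I A θ δ) (hθ : 4 * θ < 1)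
    (H : RainbowGrowth G i₀ T A v h q R) (hT : insert i₀ T ⊆ I)
    (hR : δ ≤ density (A (q h)) (R h)) (hJ : J ⊆ I \ insert i₀ T) {m : ℕ} (hm : 1 ≤ m)
    (hmJ : m ≤ J.card) :
    ∃ l ≤ h, ∃ F, RainbowGrowth G i₀ T A v l q F ∧ ∃ J₁ ⊆ J, ∃ J₂ ⊆ J \ J₁, J₁.card = m ∧
      J.card < J₂.card + 2 * m ∧
      (∀ j ∈ J₁, 3 / 4 - θ ≤ density (A j) (nbhd G (Set.accumulate F l))ᶜ) ∧
      ∀ j ∈ J₂, 1 / 4 ≤ density (A j) (nbhd G (Set.accumulate F l)) := by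
  classical
  let reached (X : Set V) : Finset ℤ := {j ∈ J | 1 / 4 ≤ density (A j) (nbhd G X)}
  obtain ⟨l, hl, F, B, HF, hB, hF, hstep⟩ :=
    H.exists_first_time (P := fun X => J.card < (reached X).card + m) S hT (by
      have hempty : reached {v} = ∅ := Finset.filter_false_of_mem fun j hj => by
        linarith [H.density_nbhd_singleton_le S hT (hJ hj) h.zero_le (H.root.ge rfl)]
      simpa [hempty] using hmJ) (by
      have hall : reached (Set.accumulate R h) = J := Finset.filter_true_of_mem fun j hj => by
        have hlt := H.density_sub_lt S hT hR (hJ hj) (A j)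
        rw [density_self (S.isBlockade.1 j (Finset.mem_sdiff.1 (hJ hj)).1)] at hlt
        linarith [density_mono (B := A j) (Set.inter_subset_left
          (s := nbhd G (Set.accumulate R h)) (t := A j))]
      rw [hall]
      omega)
  have hmissed : m ≤ (J.filter fun j => ¬ 1 / 4 ≤ density (A j) (nbhd G B)).card := by
    have := Finset.card_filter_add_card_filter_not (s := J)
      (fun j => 1 / 4 ≤ density (A j) (nbhd G B))
    simp only [reached] at hB
    omega
  obtain ⟨J₁, hJ₁, hcard⟩ := Finset.exists_subset_card_eq hmissed
  have hJ₁J : J₁ ⊆ J := hJ₁.trans (Finset.filter_subset _ _)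
  refine ⟨l, hl, F, HF, J₁, hJ₁J, reached (Set.accumulate F l) \ J₁,
    Finset.sdiff_subset_sdiff (Finset.filter_subset _ _) le_rfl, hcard, ?_, fun j hj => ?_,
    fun j hj => (Finset.mem_filter.1 (Finset.mem_sdiff.1 hj).1).2⟩
  · have := Finset.le_card_sdiff J₁ (reached (Set.accumulate F l))
    omega
  · have hlow := hstep j (hJ (hJ₁J hj)) Set.univ
    rw [Set.inter_univ, Set.inter_univ] at hlow
    linarith [not_le.1 (Finset.mem_filter.1 (hJ₁ hj)).2,
      density_add_compl (S.isBlockade.1 j (Finset.mem_sdiff.1 (hJ (hJ₁J hj))).1)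
        (X := nbhd G (Set.accumulate F l))]

theorem exists_dense_firstNbhd (S : NondivergentBlockade G I A θ δ) (hθ : 16 * θ < 1)
    (H : RainbowGrowth G i₀ T A v h q R) (hT : insert i₀ T ⊆ I)
    (hR : δ ≤ density (A (q h)) (R h)) (hhρ : h < ρ) (hJ : J ⊆ I \ insert i₀ T) (hne : J.Nonempty)
    (hU : ∀ j ∈ J, 3 / 4 - θ ≤ density (A j) U) :
    ∃ l ≤ h, ∃ Q, RainbowGrowth G i₀ T A v l q Q ∧
      (∀ j ∈ J, 3 * θ ≤ density (A j) (U \ nbhd G (Set.accumulate Q l))) ∧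
      ∃ j ∈ J, ∃ t ≤ l, 1 / (4 * (ρ : ℝ)) ≤ density (A j) (firstNbhd G Q t ∩ U) := by
  obtain ⟨l, hl, Q, B, HQ, hB, ⟨j, hj, hjQ⟩, hstep⟩ :=
    H.exists_first_time (P := fun X => ∃ j ∈ J, 1 / 4 ≤ density (A j) (nbhd G X ∩ U)) S hT
      (fun ⟨j, hj, hle⟩ => by
        linarith [H.density_nbhd_singleton_le S hT (hJ hj) h.zero_le (H.root.ge rfl),
          density_mono (B := A j) (Set.inter_subset_left (s := nbhd G {v}) (t := U))])
      (hne.imp fun j hj => ⟨hj, by linarith [H.density_sub_lt S hT hR (hJ hj) U, hU j hj]⟩)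
  refine ⟨l, hl, Q, HQ, fun i hi => ?_, j, hj, ?_⟩
  · have hlow : density (A i) (nbhd G B ∩ U) < 1 / 4 :=
      not_le.1 fun hle => hB ⟨i, hi, hle⟩
    have hsplit := density_inter_add_diff (B := A i) (X := U) (Y := nbhd G (Set.accumulate Q l))
    rw [Set.inter_comm] at hsplit
    linarith [hstep i (hJ hi) U, hU i hi]
  · have hcover : nbhd G (Set.accumulate Q l) ∩ U ⊆
        ⋃ t ∈ Finset.range (l + 1), firstNbhd G Q t ∩ U := by
      rw [← Set.iUnion₂_inter]
      exact Set.inter_subset_inter_left _ (nbhd_accumulate_subset G Q l)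
    obtain ⟨t, ht, hdens⟩ := exists_density_ge_of_subset_biUnion (N := ρ)
      (by rw [Finset.card_range]; exact_mod_cast (by omega)) hcover (by norm_num) hjQ
    exact ⟨t, Nat.lt_succ_iff.1 (Finset.mem_range.1 ht), by rwa [div_div] at hdens⟩

/- The target sets `E i` lie off the neighbourhood of `Q`, except for `E j`, which lies in the first
neighbourhood of level `t`; so growth into them can only be attached to `Q` at that level. -/
theorem exists_growth_into (S : NondivergentBlockade G I A θ δ)
    (D : Regime (Nat.card V) ρ θ δ β) (H : RainbowGrowth G i₀ T A v h q R)
    (hT : insert i₀ T ⊆ I) (hR : δ ≤ density (A (q h)) (R h)) (hhρ : h < ρ)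
    (hJ : J ⊆ I \ insert i₀ T) (hcard : J.card + 1 = ρ)
    (hU : ∀ j ∈ J, 3 / 4 - θ ≤ density (A j) U) :
    ∃ l ≤ h, ∃ Q, RainbowGrowth G i₀ T A v l q Q ∧ ∃ j ∈ J, ∃ t ≤ l, ∃ E : ℤ → Set V,
      (∀ i, E i ⊆ U ∩ A i) ∧ (∀ i ∈ J.erase j, ∀ x ≤ l, Anticomplete G (Q x) (E i)) ∧
      ∃ w ∈ firstNbhd G Q t, ∃ h' q' P, 1 ≤ h' ∧ h' + 2 ≤ ρ ∧
        RainbowGrowth G j (J.erase j) E w h' q' P ∧ δ ≤ density (A (q' h')) (P h') := by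
  classical
  have hθ := D.θ_pos
  have hρ := D.two_le_cast
  obtain ⟨l, hl, Q, HQ, hsparse, j, hj, t, ht, hdense⟩ := H.exists_dense_firstNbhd (ρ := ρ) S
    (by linarith [D.θ_le]) hT hR hhρ hJ (Finset.card_pos.1 (by have := D.two_le; omega)) hU
  have hJI : J ⊆ I := hJ.trans Finset.sdiff_subset
  let E (i : ℤ) : Set V :=
    (if i = j then firstNbhd G Q t ∩ U else U \ nbhd G (Set.accumulate Q l)) ∩ A i
  have hEj : E j = firstNbhd G Q t ∩ U ∩ A j := by simp [E]
  have hE {i : ℤ} (hi : i ∈ J.erase j) : E i = (U \ nbhd G (Set.accumulate Q l)) ∩ A i := by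
    simp only [E, if_neg (Finset.ne_of_mem_erase hi)]
  obtain ⟨Bad, hBad, hgrow⟩ := S.exists_rainbowGrowth (i₀ := j) (T := J.erase j) (E := E) D
    (hJI hj) ((Finset.erase_subset _ _).trans hJI) (Finset.notMem_erase _ _)
    (by rw [Finset.card_erase_of_mem hj]; have := D.two_le; omega)
    (fun i _ => Set.inter_subset_right) fun i hi => hE hi ▸
      (hsparse i (Finset.mem_of_mem_erase hi)).trans (density_mono_of_inter_subset le_rfl)
  have hlt : density (A j) Bad < density (A j) (firstNbhd G Q t ∩ U) := by
    refine (hBad.trans_lt ?_).trans_le hdense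
    rw [lt_div_iff₀ (by positivity)]
    nlinarith [D.mul_ρ_δ_le, D.mul_ρ_θ_le]
  obtain ⟨w, hw, hwBad⟩ := Set.not_subset.1 (mt density_mono_of_inter_subset hlt.not_ge)
  obtain ⟨h', q', P, hP⟩ := hgrow w (hEj ▸ hw) hwBad
  refine ⟨l, hl, Q, HQ, j, hj, t, ht, E, fun i => Set.inter_subset_inter_left _ ?_,
    fun i hi x hx => ?_, w, hw.1.1, h', q', P, hP⟩
  · split_ifs
    exacts [Set.inter_subset_right, Set.sdiff_subset]
  · rw [hE hi]
    exact (anticomplete_iff_disjoint_nbhd.2 Set.disjoint_sdiff_right).mono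
      (Set.subset_accumulate.trans (Set.monotone_accumulate hx)) Set.inter_subset_left

theorem exists_path_growth (S : NondivergentBlockade G I A θ δ)
    (D : Regime (Nat.card V) ρ θ δ β) (H : RainbowGrowth G i₀ T A v h q R)
    (hT : insert i₀ T ⊆ I) (hR : δ ≤ density (A (q h)) (R h)) (hhρ : h + 1 < ρ)
    (hJ : J ⊆ I \ insert i₀ T) (hcard : J.card + 1 = ρ)
    (hU : ∀ j ∈ J, 3 / 4 - θ ≤ density (A j) U) :
    ∃ (s H : ℕ) (z : ℕ → V) (q : ℕ → ℤ) (M : ℕ → Set V),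
      1 ≤ s ∧ s < ρ ∧ s < H ∧ H < s + ρ ∧ RainbowGrowth G i₀ (T ∪ J) A v H q M ∧
      (∀ t ≤ s, M t = {z t}) ∧ (∀ y, s ≤ y → y ≤ H → M y ⊆ U) ∧
      δ ≤ density (A (q H)) (M H) := by
  classical
  obtain ⟨l, hl, Q, HQ, j, hj, t, ht, E, hE, hanti, w, hw, h', q', P, hh', hh'ρ, HP, hP⟩ :=
    H.exists_growth_into S D hT hR (by omega) hJ hcard hU
  have hins : insert j (J.erase j) = J := Finset.insert_erase hj
  obtain ⟨y, hy, hyw⟩ := hw.1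
  obtain ⟨f, rfl, hf, hadj⟩ := HQ.layered.exists_transversal ht hy
  have HM := HQ.concat ht hf hadj hyw hw HP (fun i _ => (hE i).trans Set.inter_subset_right) hanti
    (by rw [hins]; exact Finset.disjoint_sdiff.mono_right hJ)
  rw [hins] at HM
  refine ⟨t + 1, t + 1 + h', PurePairs.concat (t + 1) f fun _ => w, _, _, by omega, by omega,
    by omega, by omega, HM, fun x hx => ?_, fun x hx hxH => ?_, by rwa [concat_add, concat_add]⟩
  · obtain hlt | rfl := Nat.lt_or_eq_of_le hx
    · rw [concat_of_lt hlt, concat_of_lt hlt]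
    · rw [concat_self, concat_self, HP.root]
  · obtain ⟨x, rfl⟩ := Nat.exists_eq_add_of_le hx
    rw [concat_add]
    exact (HP.layer_subset (by omega)).trans ((hE _).trans Set.inter_subset_left)

end RainbowGrowth

end Sources

section BaseCase

variable {G : SimpleGraph V} {I J T T' : Finset ℤ} {A : ℤ → Set V} {δ θ β : ℝ} {ρ : ℕ} {i₀ : ℤ}
  {v : V} {s H l : ℕ} {qF qM : ℕ → ℤ} {F M : ℕ → Set V} {z : ℕ → V}

theorem RainbowGrowth.isRainbow_elim (HF : RainbowGrowth G i₀ T A v l qF F)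
    (HM : RainbowGrowth G i₀ T' A v H qM M) (hT : insert i₀ T ⊆ I) (hT' : insert i₀ T' ⊆ I)
    (hdisj : Disjoint T (insert i₀ T')) :
    IsRainbow I A {p | p.IsIn H l 0} (Piece.elim M F ⊥) (Piece.elim qM qF 0) := by
  have hne {t u : ℕ} (ht : 1 ≤ t ∧ t ≤ l) (hu : u ≤ H) : qF t ≠ qM u := fun h =>
    Finset.disjoint_left.1 hdisj (HF.mem_of_pos ht.2 ht.1) (h ▸ HM.mem_insert hu)
  refine ⟨?_, ?_⟩
  · rintro (t | t | t) ht
    exacts [⟨hT' (HM.mem_insert ht), HM.layer_subset ht⟩,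
      ⟨hT (HF.mem_insert ht.2), HF.layer_subset ht.2⟩, absurd ht t.not_lt_zero]
  · rintro (t | t | t) ht (u | u | u) hu h
    exacts [congrArg Piece.left (HM.rainbow.2 ht hu h), (hne hu ht h.symm).elim,
      absurd hu u.not_lt_zero, (hne ht hu h).elim, congrArg Piece.right (HF.rainbow.2 ht.2 hu.2 h),
      absurd hu u.not_lt_zero, absurd ht t.not_lt_zero, absurd ht t.not_lt_zero,
      absurd ht t.not_lt_zero]

theorem RainbowGrowth.seed (HF : RainbowGrowth G i₀ T A v l qF F)
    (HM : RainbowGrowth G i₀ T' A v H qM M) (hT : insert i₀ T ⊆ I) (hT' : insert i₀ T' ⊆ I)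
    (hdisj : Disjoint T (insert i₀ T')) (hJ : J ⊆ I \ (insert i₀ T ∪ insert i₀ T'))
    (hl : l < ρ) (hs : 1 ≤ s) (hsρ : s < ρ) (hsH : s < H) (hH : H < s + ρ)
    (hz : ∀ t ≤ s, M t = {z t})
    (hanti : ∀ y, s ≤ y → y ≤ H → M y ⊆ (nbhd G (Set.accumulate F l))ᶜ)
    (hM : δ ≤ density (A (qM H)) (M H))
    (hF : ∀ j ∈ J, 1 / 4 ≤ density (A j) (nbhd G (Set.accumulate F l))) :
    Seed G I A δ ρ J z M F s H l
      (Piece.elim qM qF 0) where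
  one_le := hs
  s_lt := hsρ
  l_lt := hl
  H_lt := hH
  path := hz
  root := by rw [HF.root, ← HM.root, hz 0 (Nat.zero_le _)]
  left := HM.layered
  right := HF.layered
  anticomplete t ht y hy hyH := anticomplete_iff_disjoint_nbhd.2 <|
    (disjoint_compl_right.mono_right (hanti y hy hyH)).mono_left
      (nbhd_mono (Set.subset_accumulate.trans (Set.monotone_accumulate ht)))
  rainbow := HF.isRainbow_elim HM hT hT' hdisj
  subset := hJ.trans Finset.sdiff_subset
  label_notMem := by
    rintro (t | t | t) ht hj
    · exact (Finset.mem_sdiff.1 (hJ hj)).2 (Finset.mem_union_right _ (HM.mem_insert ht))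
    · exact (Finset.mem_sdiff.1 (hJ hj)).2 (Finset.mem_union_left _ (HF.mem_insert ht.2))
    · exact t.not_lt_zero ht
  s_lt_H := hsH
  le_density_top := hM
  le_density_nbhd := hF

variable [Finite V]

theorem exists_common_root (S : NondivergentBlockade G I A θ δ)
    (D : Regime (Nat.card V) ρ θ δ β) (hi₀ : i₀ ∈ I) (hT : T ⊆ I.erase i₀) (hT' : T' ⊆ I.erase i₀)
    (hcard : T.card + 2 = ρ) (hcard' : T'.card + 2 = ρ) :
    ∃ v, ∀ T₁ ∈ ({T, T'} : Set (Finset ℤ)), ∃ h q R, h + 2 ≤ ρ ∧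
      RainbowGrowth G i₀ T₁ A v h q R ∧ δ ≤ density (A (q h)) (R h) := by
  have hself (i : ℤ) (hi : i ∈ I) : 3 * θ ≤ density (A i) (A i) := by
    rw [density_self (S.isBlockade.1 i hi)]
    linarith [D.θ_le, D.θ_pos]
  have hgrow {T₁ : Finset ℤ} (h : T₁ ⊆ I.erase i₀) (hc : T₁.card + 2 = ρ) :=
    S.exists_rainbowGrowth D hi₀ (h.trans (Finset.erase_subset _ _))
      (fun hi => Finset.notMem_erase _ _ (h hi)) hc (fun _ _ => le_rfl)
      fun j hj => hself j (Finset.mem_of_mem_erase (h hj))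
  obtain ⟨B, hB, hgrowB⟩ := hgrow hT hcard
  obtain ⟨B', hB', hgrowB'⟩ := hgrow hT' hcard'
  have hlt : density (A i₀) (B ∪ B') < density (A i₀) (A i₀) := by
    rw [density_self (S.isBlockade.1 i₀ hi₀)]
    linarith [density_union_le (B := A i₀) (X := B) (Y := B'), D.mul_ρ_δ_le, D.θ_le, D.δ_pos]
  obtain ⟨v, hv, hvB⟩ := Set.not_subset.1 (mt density_mono_of_inter_subset hlt.not_ge)
  rw [Set.mem_union, not_or] at hvB
  refine ⟨v, ?_⟩
  rintro T₁ (rfl | rfl)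
  · obtain ⟨h, q, R, -, hR⟩ := hgrowB v hv.1 hvB.1
    exact ⟨h, q, R, hR⟩
  · obtain ⟨h, q, R, -, hR⟩ := hgrowB' v hv.1 hvB.2
    exact ⟨h, q, R, hR⟩

theorem RainbowGrowth.exists_seed {q q' : ℕ → ℤ} {R R' : ℕ → Set V} {h h' p : ℕ}
    (S : NondivergentBlockade G I A θ δ) (D : Regime (Nat.card V) (p + 2) θ δ β) (hi₀ : i₀ ∈ I)
    (hT : T ⊆ I.erase i₀) (hT' : T' ⊆ I.erase i₀ \ T) (hT'card : T'.card = p)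
    (HR : RainbowGrowth G i₀ T A v h q R) (hR : δ ≤ density (A (q h)) (R h)) (hh : h ≤ p)
    (HR' : RainbowGrowth G i₀ T' A v h' q' R') (hR' : δ ≤ density (A (q' h')) (R' h'))
    (hh' : h' ≤ p) (hJ : J = (I.erase i₀ \ T) \ T') (hJcard : p < J.card) :
    ∃ J₂ z M F s H l r, Seed G I A δ (p + 2) J₂ z M F s H l r ∧
      J.card < J₂.card + 2 * (p + 1) := by
  have hins {U : Finset ℤ} (h : U ⊆ I.erase i₀) : insert i₀ U ⊆ I :=
    Finset.insert_subset hi₀ (h.trans (Finset.erase_subset _ _))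
  have hT'I : T' ⊆ I.erase i₀ := hT'.trans Finset.sdiff_subset
  obtain ⟨l, hl, F, HF, J₁, hJ₁, J₂, hJ₂, hJ₁card, hJ₂card, hF₁, hF₂⟩ := HR.exists_balanced S
    (by linarith [D.θ_le, D.θ_pos]) (hins hT) hR (J := J) (m := p + 1) (by grind) (by omega) hJcard
  obtain ⟨s, H, z, r, M, hs, hsρ, hsH, hH, HM, hz, hM, hMtop⟩ := HR'.exists_path_growth S D
    (hins hT'I) hR' (U := (nbhd G (Set.accumulate F l))ᶜ) (by omega)
    (show J₁ ⊆ I \ insert i₀ T' by grind) (by omega) hF₁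
  exact ⟨J₂, z, M, F, s, H, l, _, HF.seed HM (hins hT) (hins (by grind))
    (Finset.disjoint_left.2 (by grind)) (by grind)
    (by omega) hs hsρ hsH hH hz hM hMtop hF₂, hJ₂card⟩

theorem exists_seed (S : NondivergentBlockade G I A θ δ) (D : Regime (Nat.card V) ρ θ δ β)
    (hI : 4 * ρ ≤ I.card) :
    ∃ J z M F s H l q, Seed G I A δ ρ J z M F s H l q ∧ I.card ≤ J.card + 4 * ρ := by
  obtain ⟨p, rfl⟩ := Nat.exists_eq_add_of_le' D.two_le
  obtain ⟨i₀, hi₀⟩ := Finset.card_pos.1 (show 0 < I.card by omega)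
  have herase : (I.erase i₀).card + 1 = I.card := Finset.card_erase_add_one hi₀
  obtain ⟨T, hT, hTcard⟩ := Finset.exists_subset_card_eq (show p ≤ (I.erase i₀).card by omega)
  have hrest := Finset.card_sdiff_add_card_eq_card hT
  obtain ⟨T', hT', hT'card⟩ :=
    Finset.exists_subset_card_eq (show p ≤ (I.erase i₀ \ T).card by omega)
  have hrest' := Finset.card_sdiff_add_card_eq_card hT'
  obtain ⟨v, hv⟩ := exists_common_root S D hi₀ hT (hT'.trans Finset.sdiff_subset) (by omega)
    (by omega)
  obtain ⟨h, q, R, hh, HR, hR⟩ := hv T (.inl rfl)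
  obtain ⟨h', q', R', hh', HR', hR'⟩ := hv T' (.inr rfl)
  obtain ⟨J, z, M, F, s, H, l, r, W, hJ⟩ := HR.exists_seed S D hi₀ hT hT' hT'card hR (by omega)
    HR' hR' (by omega) rfl (by omega)
  exact ⟨J, z, M, F, s, H, l, r, W, by omega⟩

theorem exists_hasBiLevelling (S : NondivergentBlockade G I A θ δ)
    (D : Regime (Nat.card V) ρ θ δ β) (hI : 4 * ρ < I.card) :
    ∃ h, 3 ≤ h ∧ h + 3 ≤ 3 * ρ ∧ ∀ (n : ℕ) (η : ℝ), 0 < η → n * ρ ^ 4 + 4 * ρ ≤ I.card →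
      n * (η + θ) ≤ 1 / (8 * (ρ : ℝ) ^ 4) → HasBiLevelling G I A n h η := by
  obtain ⟨J, z, M, F, s, H, l, q, W, hJ⟩ := exists_seed S D hI.le
  obtain ⟨h, hh, hlH, hn⟩ := W.exists_hasBiLevelling S D (Finset.card_pos.1 (by omega))
  have := W.l_lt
  have := W.H_lt
  have := W.s_lt
  exact ⟨h, hh, by omega, fun n η hη hnI => hn n η hη (by omega)⟩

end BaseCase

section BiLevellingConversion

variable {G : SimpleGraph V} {I : Finset ℤ} {A : ℤ → Set V} {h : ℕ} {R : ℕ → Set V} {η : ℝ}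

theorem IsRainbow.pairwiseDisjoint {κ : Type*} {S : Set κ} {X : κ → Set V} {q : κ → ℤ}
    (H : IsRainbow I A S X q) (hA : IsBlockade I A) : S.PairwiseDisjoint X :=
  fun k hk k' hk' hne =>
    (hA.2 _ (H.1 k hk).1 _ (H.1 k' hk').1 (H.2.ne hk hk' hne)).mono (H.1 k hk).2 (H.1 k' hk').2

theorem Layered.isLevelling (H : Layered G R h) (hh : 1 ≤ h) (hroot : (R 0).ncard = 1)
    (hdisj : (Set.Iic h).PairwiseDisjoint R) : IsLevelling G R h :=
  ⟨hh, hroot, fun _ hi _ hj hij => hdisj hi hj hij,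
    fun i hi hih => by simpa [Nat.sub_add_cancel hi] using H.covers (i - 1) (by omega),
    fun i _ hih t hti => H.anticomplete t i hti hih⟩

theorem Layered.reaches {J : Finset ℤ} {C : ℤ → Set V} (H : Layered G R h)
    (hroot : (R 0).ncard = 1) (hdisj : (Set.Iic h).PairwiseDisjoint R)
    (hC : ∀ i ≤ h, ∀ j ∈ J, Disjoint (R i) (C j)) (hcov : ∀ j ∈ J, Covers G (R h) (C j))
    (hanti : ∀ i < h, ∀ j ∈ J, Anticomplete G (R i) (C j)) : Reaches G R h (⋃ j ∈ J, C j) := by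
  have hupdate : (fun i => if i = h + 1 then ⋃ j ∈ J, C j else R i) =
      Function.update R (h + 1) (⋃ j ∈ J, C j) :=
    funext fun i => (Function.update_apply ..).symm
  rw [Reaches, hupdate]
  refine (H.snoc (fun v hv => ?_) fun i hi u hu v hv => ?_).isLevelling (by omega)
    (by rwa [Function.update_of_ne (by omega)]) ?_
  · obtain ⟨j, hj, hvj⟩ := Set.mem_iUnion₂.1 hv
    exact hcov j hj v hvj
  · obtain ⟨j, hj, hvj⟩ := Set.mem_iUnion₂.1 hv
    exact hanti i hi j hj u hu v hvj
  · have htop : ∀ i ≤ h, Disjoint (R i) (⋃ j ∈ J, C j) := fun i hi =>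
      Set.disjoint_iUnion₂_right.2 (hC i hi)
    intro i hi j hj hij
    simp only [Set.mem_Iic, Function.onFun, Function.update_apply] at hi hj ⊢
    split_ifs with hi' hj' hj'
    · exact absurd (hi'.trans hj'.symm) hij
    · exact (htop j (by omega)).symm
    · exact htop i (by omega)
    · exact hdisj (show i ≤ h by omega) (show j ≤ h by omega) hij

/-- The piece of a bi-levelling that is level `t` of `M`: the common root counts as `left 0`. -/
def Piece.ofRight : ℕ → Piece
  | 0 => .left 0
  | t + 1 => .right (t + 1)

namespace OrderedBiLevelling

variable {L M C Y : ℕ → Set V} {a b N : ℕ} {q : Piece → ℤ}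

theorem rainbow_left (H : OrderedBiLevelling G I A L M C Y a b N η q) :
    IsRainbow I A (Set.Iic a) L (q ∘ .left) :=
  H.rainbow.comp (fun _ _ _ _ => Piece.left.inj) (fun _ ht => ht) fun _ _ => le_rfl

theorem rainbow_right (H : OrderedBiLevelling G I A L M C Y a b N η q) :
    IsRainbow I A (Set.Iic b) M (q ∘ Piece.ofRight) := by
  refine H.rainbow.comp ?_ ?_ ?_
  · rintro (_ | t) - (_ | u) - h <;> cases h <;> rfl
  · rintro (_ | t) ht
    exacts [a.zero_le, ⟨t.succ_pos, ht⟩]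
  · rintro (_ | t) -
    exacts [H.root_eq.ge, le_rfl]

theorem rainbow_block (H : OrderedBiLevelling G I A L M C Y a b N η q) :
    IsRainbow I A (Set.Iio N) C (q ∘ .block) :=
  H.rainbow.comp (fun _ _ _ _ => Piece.block.inj) (fun _ ht => ht) fun _ _ => le_rfl

theorem disjoint_right_left (H : OrderedBiLevelling G I A L M C Y a b N η q)
    (hA : IsBlockade I A) {i j : ℕ} (hj : 1 ≤ j) (hjb : j ≤ b) (hi : i ≤ a) :
    Disjoint (M j) (L i) :=
  H.rainbow.pairwiseDisjoint hA (x := .right j) ⟨hj, hjb⟩ (y := .left i) hi nofun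

theorem disjoint_left_block (H : OrderedBiLevelling G I A L M C Y a b N η q)
    (hA : IsBlockade I A) {i t : ℕ} (hi : i ≤ a) (ht : t < N) : Disjoint (L i) (C t) :=
  H.rainbow.pairwiseDisjoint hA (x := .left i) hi (y := .block t) ht nofun

theorem disjoint_right_block (H : OrderedBiLevelling G I A L M C Y a b N η q)
    (hA : IsBlockade I A) {i t : ℕ} (hi : i ≤ b) (ht : t < N) : Disjoint (M i) (C t) := by
  obtain rfl | hi₀ := i.eq_zero_or_pos
  · exact H.root_eq ▸ H.disjoint_left_block hA a.zero_le ht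
  · exact H.rainbow.pairwiseDisjoint hA (x := .right i) ⟨hi₀, hi⟩ (y := .block t) ht nofun

theorem parallel_levels (H : OrderedBiLevelling G I A L M C Y a b N η q) (hA : IsBlockade I A) :
    Parallel G L a M b := by
  refine ⟨H.root_eq, ?_, fun u hu v hv => ?_⟩
  · simp only [Set.disjoint_iUnion_left, Set.disjoint_iUnion_right, Finset.mem_Icc]
    exact fun i hi j hj => H.disjoint_right_left hA hj.1 hj.2 hi.2
  · simp only [Set.mem_iUnion, Finset.mem_Icc] at hu hv
    obtain ⟨j, hj, hu⟩ := hu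
    obtain ⟨i, hi, hv⟩ := hv
    exact H.parallel j hj.1 hj.2 i hi.1 hi.2 u hu v hv

theorem isBlockade_blocks (H : OrderedBiLevelling G I A L M C Y a b N η q) (hA : IsBlockade I A)
    (hη : 0 < η) : IsBlockade (Finset.Ico 0 (N : ℤ)) (fun j => C j.toNat) := by
  simp only [IsBlockade, Finset.mem_Ico]
  refine ⟨fun j hj => ?_, fun i hi j hj hij => ?_⟩
  · exact (nonempty_of_density_pos (hη.trans_le (H.le_density j.toNat (by omega)))).mono
      Set.inter_subset_left
  · exact H.rainbow_block.pairwiseDisjoint hA (show i.toNat < N by omega)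
      (show j.toNat < N by omega) (by omega)

theorem gradesFwd (H : OrderedBiLevelling G I A L M C Y a b N η q) (hA : IsBlockade I A) :
    GradesFwd G L a (Finset.Ico 0 (N : ℤ)) (fun j => C j.toNat) := by
  refine ⟨H.left.reaches H.root_ncard (H.rainbow_left.pairwiseDisjoint hA) ?_ ?_ ?_, ?_⟩ <;>
    simp only [Finset.mem_Ico]
  · exact fun i hi j hj => H.disjoint_left_block hA hi (by omega)
  · exact fun j hj => (H.grading.covers _ _ le_rfl (by omega)).mono
      (H.grading.subset j.toNat (by omega)) le_rfl
  · exact fun i hi j hj => H.left_anticomplete i hi j.toNat (by omega)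
  · exact fun j hj => ⟨Y j.toNat, H.grading.subset _ (by omega),
      fun i hi hij => H.grading.covers _ _ (by omega) (by omega),
      fun i hi hij => H.grading.anticomplete _ (by omega) _ (by omega)⟩

theorem isBiLevelling (H : OrderedBiLevelling G I A L M C Y a b N η q) (hA : IsBlockade I A)
    (hη : 0 < η) : IsBiLevelling G L a M b (Finset.Ico 0 (N : ℤ)) (fun j => C j.toNat) := by
  have hroot : (M 0).ncard = 1 := H.root_eq ▸ H.root_ncard
  have hM := H.rainbow_right.pairwiseDisjoint hA
  refine ⟨H.isBlockade_blocks hA hη,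
    H.left.isLevelling H.one_le_left H.root_ncard (H.rainbow_left.pairwiseDisjoint hA),
    H.right.isLevelling H.one_le_right hroot hM, H.parallel_levels hA,
    H.right.reaches hroot hM ?_ ?_ ?_, H.gradesFwd hA⟩ <;> simp only [Finset.mem_Ico]
  · exact fun i hi j hj => H.disjoint_right_block hA hi (by omega)
  · exact fun j hj => H.right_covers j.toNat (by omega)
  · exact fun i hi j hj => H.right_anticomplete i hi j.toNat (by omega)

theorem rainbowBiLevelling (H : OrderedBiLevelling G I A L M C Y a b N η q) :
    RainbowBiLevelling I A L a M b (Finset.Ico 0 (N : ℤ)) (fun j => C j.toNat) := by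
  have hq {p p' : Piece} (hp : p.IsIn a b N) (hp' : p'.IsIn a b N) (h : p ≠ p') : q p ≠ q p' :=
    H.rainbow.2.ne hp hp' h
  have hblock {j : ℤ} (hj : j ∈ Finset.Ico 0 (N : ℤ)) : (Piece.block j.toNat).IsIn a b N := by
    rw [Finset.mem_Ico] at hj
    exact show j.toNat < N by omega
  refine ⟨fun j => q (.block j.toNat), fun i => q (.left i), fun i => q (.right i),
    fun j hj => H.rainbow.1 (.block j.toNat) (hblock hj), fun i hi => H.rainbow.1 (.left i) hi,
    fun i hi hib => H.rainbow.1 (.right i) ⟨hi, hib⟩, fun j hj j' hj' h => ?_,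
    fun i hi i' hi' h => H.rainbow_left.2 hi hi' h,
    fun i hi hib i' hi' hib' h => by_contra fun hne =>
      hq (p := .right i) ⟨hi, hib⟩ (p' := .right i') ⟨hi', hib'⟩ (mt Piece.right.inj hne) h,
    fun j hj i hi => hq (hblock hj) hi nofun,
    fun j hj i hi hib => hq (hblock hj) (p' := .right i) ⟨hi, hib⟩ nofun,
    fun i hi i' hi' hib' => hq (p := .left i) hi (p' := .right i') ⟨hi', hib'⟩ nofun⟩
  have hjj' := H.rainbow_block.2 (hblock hj) (hblock hj') h
  rw [Finset.mem_Ico] at hj hj'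
  omega

theorem sizeGE (H : OrderedBiLevelling G I A L M C Y a b N η q) (hA : IsBlockade I A)
    (hη : 0 < η) : SizeGE I A (Finset.Ico 0 (N : ℤ)) (fun j => C j.toNat) η := by
  intro j hj i hi hCA
  obtain ⟨x, hx⟩ := (H.isBlockade_blocks hA hη).1 j hj
  rw [Finset.mem_Ico] at hj
  obtain ⟨hqI, hqA⟩ := H.rainbow_block.1 j.toNat (show j.toNat < N by omega)
  have hiq : i = q (.block j.toNat) := by
    by_contra hne
    exact Set.disjoint_left.1 (hA.2 i hi _ hqI hne) (hCA hx) (hqA hx)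
  have hdens := H.le_density j.toNat (by omega)
  rw [← hiq, density, Set.inter_eq_left.2 hCA] at hdens
  exact mul_le_of_le_div₀ (Nat.cast_nonneg _) (Nat.cast_nonneg _) hdens

end OrderedBiLevelling

theorem HasBiLevelling.exists_isBiLevelling {N : ℕ} (hA : IsBlockade I A) (hη : 0 < η)
    (H : HasBiLevelling G I A N h η) :
    ∃ (L : ℕ → Set V) (a : ℕ) (M : ℕ → Set V) (b : ℕ) (J : Finset ℤ) (C : ℤ → Set V),
      IsBiLevelling G L a M b J C ∧ RainbowBiLevelling I A L a M b J C ∧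
      J.card = N ∧ a + b = h ∧ SizeGE I A J C η := by
  obtain ⟨L, M, C, Y, a, b, q, rfl, H⟩ := H
  exact ⟨L, a, M, b, Finset.Ico 0 (N : ℤ), fun j => C j.toNat, H.isBiLevelling hA hη,
    H.rainbowBiLevelling, by simp, rfl, H.sizeGE hA hη⟩

end BiLevellingConversion

section Parameters

variable {k m ρ ℓ K : ℕ}

theorem mul_ceil_add_one_pow_le {x : ℝ} (hx : 0 ≤ x) :
    k * (⌈x⌉₊ + 1) ^ m ≤ ⌈k * (x + 2) ^ m⌉₊ := by
  have hceil := Nat.ceil_lt_add_one hx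
  have hle : (k : ℝ) * ((⌈x⌉₊ : ℝ) + 1) ^ m ≤ k * (x + 2) ^ m :=
    mul_le_mul_of_nonneg_left (pow_le_pow_left₀ (by positivity) (by linarith) m) k.cast_nonneg
  exact_mod_cast hle.trans (Nat.le_ceil _)

theorem mul_pow_add_lt_of_mul_succ_pow_le (hk : 1 ≤ k) (hρ : 1 ≤ ρ) (hm : m + 3 ≤ ℓ)
    (hK : k * (ρ + 1) ^ (ℓ + 2) ≤ K) : k * ρ ^ m * ρ ^ 4 + 4 * ρ < K := by
  have hroom : 4 * ρ < k * (ρ + 1) ^ (m + 4) := calc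
    4 * ρ < ρ ^ 4 + 4 * ρ ^ 3 + 6 * ρ ^ 2 + 4 * ρ + 1 := by omega
    _ = (ρ + 1) ^ 4 := by ring
    _ ≤ (ρ + 1) ^ (m + 4) := Nat.pow_le_pow_right (by omega) (by omega)
    _ ≤ k * (ρ + 1) ^ (m + 4) := Nat.le_mul_of_pos_left _ hk
  calc k * ρ ^ m * ρ ^ 4 + 4 * ρ = k * ρ ^ (m + 4) + 4 * ρ := by ring
    _ < k * (ρ + 1) ^ (m + 4) + k * (ρ + 1) ^ (m + 4) := by gcongr; omega
    _ = k * (ρ + 1) ^ (m + 4) * 2 := by ring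
    _ ≤ k * (ρ + 1) ^ (m + 4) * (ρ + 1) := by gcongr; omega
    _ = k * (ρ + 1) ^ (m + 5) := by ring
    _ ≤ k * (ρ + 1) ^ (ℓ + 2) :=
      Nat.mul_le_mul_left k (Nat.pow_le_pow_right (by omega) (by omega))
    _ ≤ K := hK

theorem pow_mul_le_of_mul_succ_pow_le (hρ : 2 ≤ ρ) (hm : m + 3 ≤ ℓ)
    (hK : k * (ρ + 1) ^ (ℓ + 2) ≤ K) :
    8 * ρ ^ 4 * (k * ρ ^ m) * 2 ^ (m + 13) ≤ 2 ^ (8 + ℓ) * (ρ ^ 3 * K) := by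
  have hK' : 32 * (k * ρ ^ (m + 1)) ≤ K := calc
    32 * (k * ρ ^ (m + 1)) ≤ 3 ^ 4 * (k * ρ ^ (m + 1)) := Nat.mul_le_mul_right _ (by norm_num)
    _ ≤ (ρ + 1) ^ 4 * (k * (ρ + 1) ^ (m + 1)) := by
      gcongr
      exacts [by omega, ρ.le_succ]
    _ = k * (ρ + 1) ^ (m + 5) := by ring
    _ ≤ k * (ρ + 1) ^ (ℓ + 2) :=
      Nat.mul_le_mul_left k (Nat.pow_le_pow_right (by omega) (by omega))
    _ ≤ K := hK
  calc 8 * ρ ^ 4 * (k * ρ ^ m) * 2 ^ (m + 13)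
      = 2 ^ (m + 11) * (ρ ^ 3 * (32 * (k * ρ ^ (m + 1)))) := by ring
    _ ≤ 2 ^ (8 + ℓ) * (ρ ^ 3 * K) :=
      Nat.mul_le_mul (Nat.pow_le_pow_right two_pos (by omega)) (Nat.mul_le_mul_left _ hK')

theorem mul_le_pow_self_of_succ_pow_le (hρ : 2 ≤ ρ) (hℓ : 4 ≤ ℓ) (hK : (ρ + 1) ^ (ℓ + 2) ≤ K) :
    16 * ρ * (2 ^ (8 + ℓ) * (ρ ^ 3 * K)) ≤ K ^ K := by
  have hpow {i j : ℕ} (hi : i ≤ ρ + 1) (hj : j ≤ ℓ + 2) : i ^ j ≤ K :=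
    ((Nat.pow_le_pow_left hi j).trans (Nat.pow_le_pow_right (by omega) hj)).trans hK
  have h16 : 16 ≤ K := hpow (i := 2) (j := 4) (by omega) (by omega)
  calc 16 * ρ * (2 ^ (8 + ℓ) * (ρ ^ 3 * K)) = 16 * 2 ^ (8 + ℓ) * ρ ^ 4 * K := by ring
    _ ≤ 16 * 2 ^ ((ℓ + 2) * 2) * ρ ^ 4 * K := by gcongr <;> omega
    _ = 16 * (2 ^ (ℓ + 2)) ^ 2 * ρ ^ 4 * K := by rw [pow_mul]
    _ ≤ K * K ^ 2 * K * K := by gcongr <;> exact hpow (by omega) (by omega)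
    _ = K ^ 5 := by ring
    _ ≤ K ^ K := Nat.pow_le_pow_right (by omega) (by omega)

theorem rpow_neg_div_two_pow_mul_lt_one {c x : ℝ} (hx : 1 ≤ x) (hm : 1 ≤ m) (hc : 1 ≤ c * m) :
    (x ^ (-c) / 2) ^ m * x < 1 := by
  have hpow : x ^ (-c * m) ≤ x⁻¹ := by
    rw [← Real.rpow_neg_one]
    exact Real.rpow_le_rpow_of_exponent_le hx (by linarith)
  calc (x ^ (-c) / 2) ^ m * x = x ^ (-c * m) * x / 2 ^ m := by
        rw [div_pow, ← Real.rpow_mul_natCast (by linarith)]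
        ring
    _ ≤ x⁻¹ * x / 2 ^ m := by gcongr
    _ = 1 / 2 ^ m := by rw [inv_mul_cancel₀ (by linarith)]
    _ < 1 := (div_lt_one (by positivity)).2 (one_lt_pow₀ one_lt_two (by omega))

theorem regime_of_succ_pow_le {n : ℕ} {c θ : ℝ} (hc : 0 < c) (hn : 1 ≤ n) (hρ : 1 + 1 / c ≤ ρ)
    (hℓ : 4 ≤ ℓ) (hK : (ρ + 1) ^ (ℓ + 2) ≤ K) (hθ : 2 ^ (8 + ℓ) * ((ρ : ℝ) ^ 3 * K) * θ = 1) :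
    Regime n ρ θ ((K : ℝ) ^ (-(K : ℤ)) * (n : ℝ) ^ (-c)) ((n : ℝ) ^ (-c) / 2) := by
  have hn' : (1 : ℝ) ≤ n := by exact_mod_cast hn
  have hn₀ : 0 < (n : ℝ) ^ (-c) := by positivity
  have hρ₂ : 2 ≤ ρ := by
    have : (1 : ℝ) < ρ := by linarith [one_div_pos.2 hc]
    exact_mod_cast this
  have hK₀ : 0 < K := lt_of_lt_of_le (by positivity) hK
  have hθ₀ : 0 < θ := pos_of_mul_pos_right (hθ ▸ one_pos) (by positivity)
  refine ⟨by positivity, hθ₀, by positivity, ?_, hρ₂, ?_, ?_, ?_⟩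
  · linarith [Real.rpow_le_one_of_one_le_of_nonpos hn' (neg_nonpos.2 hc.le)]
  · have hKK : 16 * ρ * (2 ^ (8 + ℓ) * ((ρ : ℝ) ^ 3 * K)) ≤ (K : ℝ) ^ K := by
      exact_mod_cast mul_le_pow_self_of_succ_pow_le hρ₂ hℓ hK
    have hδ : 16 * ρ * (K : ℝ) ^ (-(K : ℤ)) ≤ θ := by
      rw [zpow_neg, zpow_natCast, ← div_eq_mul_inv, div_le_iff₀ (by positivity)]
      calc (16 * ρ : ℝ) = θ * (16 * ρ * (2 ^ (8 + ℓ) * ((ρ : ℝ) ^ 3 * K))) := by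
            linear_combination -(16 * ρ : ℝ) * hθ
        _ ≤ θ * (K : ℝ) ^ K := by gcongr
    nlinarith
  · have hρK : (ρ : ℝ) ^ 2 ≤ K := by
      exact_mod_cast ((Nat.pow_le_pow_left ρ.le_succ 2).trans
        (Nat.pow_le_pow_right (by omega) (by omega))).trans hK
    calc 256 * (ρ : ℝ) ^ 5 * θ = 2 ^ (8 + 0) * ((ρ : ℝ) ^ 3 * ρ ^ 2) * θ := by ring
      _ ≤ 2 ^ (8 + ℓ) * ((ρ : ℝ) ^ 3 * K) * θ := by
        gcongr
        exacts [one_le_two, ℓ.zero_le]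
      _ = 1 := hθ
  · refine rpow_neg_div_two_pow_mul_lt_one hn' (by omega) ?_
    rw [Nat.cast_pred (by omega), mul_comm, ← div_le_iff₀ hc]
    linarith

theorem two_pow_mul_two_zpow_div {x : ℝ} (hx : x ≠ 0) (m n : ℕ) :
    2 ^ (m + n) * x * ((2 : ℝ) ^ (-(m : ℤ) - n) / x) = 1 := by
  rw [← neg_add', ← Nat.cast_add, zpow_neg, zpow_natCast]
  field_simp

theorem two_zpow_add_sub_div (x : ℝ) (m : ℕ) (i j : ℤ) :
    (2 : ℝ) ^ (m + i - j) / x = 2 ^ m * (2 ^ (i - j) / x) := by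
  rw [add_sub_assoc, zpow_add₀ two_ne_zero, zpow_natCast, mul_div_assoc]

end Parameters

section Assembly

variable {G : SimpleGraph V} {I : Finset ℤ} {A : ℤ → Set V} {γ lam θ δ β : ℝ} {k ρ ℓ : ℕ}

theorem NondivergentBlockade.of_le (hA : IsBlockade I A) (hI : 1 < I.card)
    (hlink : LinkageLE G I A lam) (hdiv : ¬ Divergent G I A γ δ) (hlam : lam ≤ θ) (hγ : γ ≤ θ) :
    NondivergentBlockade G I A θ δ where
  isBlockade := hA
  linkageLE i hi j hj hij v hv := (hlink i hi j hj hij v hv).trans (by gcongr)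
  not_divergent := fun ⟨i, hi, j, hj, hij, X, hX, Y, hY, hδX, hθY, hXY⟩ =>
    hdiv ⟨j, hj, i, hi, hij.symm, Y, hY, X, hX, (by gcongr : _ ≤ _).trans hθY, hδX, hXY.symm⟩
  one_lt_card := hI

theorem hasBiLevelling_of_mul_succ_pow_le [Finite V] (S : NondivergentBlockade G I A θ δ)
    (D : Regime (Nat.card V) ρ θ δ β) (hk : 1 ≤ k) (hℓ : 3 * ρ - 2 ≤ ℓ)
    (hI : k * (ρ + 1) ^ (ℓ + 2) ≤ I.card)
    (hθ : 2 ^ (8 + ℓ) * ((ρ : ℝ) ^ 3 * I.card) * θ = 1) :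
    HasBiLevelling G I A k ℓ (2 ^ 12 * θ) := by
  have hρ := D.two_le
  have hθ₀ := D.θ_pos
  obtain ⟨h, hh, hhρ, hbase⟩ := exists_hasBiLevelling S D (by
    have := mul_pow_add_lt_of_mul_succ_pow_le (m := 0) hk (by omega) (by omega) hI
    omega)
  obtain ⟨m, rfl⟩ : ∃ m, ℓ = h + m := Nat.exists_eq_add_of_le (by omega)
  have hm : m + 3 ≤ h + m := by omega
  have h2m : (1 : ℝ) ≤ 2 ^ m := one_le_pow₀ one_le_two
  refine HasBiLevelling.add S D hk (by linarith) (hbase _ _ ?_ ?_ ?_)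
  · nlinarith
  · exact (mul_pow_add_lt_of_mul_succ_pow_le hk (by omega) hm hI).le
  · have hsize : (8 * (ρ : ℝ) ^ 4 * (k * ρ ^ m)) * 2 ^ (m + 13) ≤
        2 ^ (8 + (h + m)) * (ρ ^ 3 * I.card) := by
      exact_mod_cast pow_mul_le_of_mul_succ_pow_le hρ hm hI
    rw [le_div_iff₀ (by positivity)]
    calc ((k * ρ ^ m : ℕ) : ℝ) * (2 ^ m * (2 ^ 12 * θ + 2 * θ) - 2 * θ + θ) * (8 * (ρ : ℝ) ^ 4)
        ≤ (k * ρ ^ m) * (2 ^ (m + 13) * θ) * (8 * (ρ : ℝ) ^ 4) := by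
          push_cast
          gcongr
          rw [pow_add]
          nlinarith
      _ = 8 * (ρ : ℝ) ^ 4 * (k * ρ ^ m) * 2 ^ (m + 13) * θ := by ring
      _ ≤ 2 ^ (8 + (h + m)) * (ρ ^ 3 * I.card) * θ := by gcongr
      _ = 1 := hθ

end Assembly

/-- obtaining an `A`-rainbow bi-levelling of length `k` and height
exactly `ℓ`. -/
theorem statement_15 {V : Type} [Fintype V] (G : SimpleGraph V)
    (k : ℕ) (hk : 1 ≤ k) (c : ℝ) (hc : 0 < c)
    (ρ : ℕ) (hρ : ρ = ⌈1 + 1/c⌉₊) (ℓ : ℕ) (hℓ : 3 * ρ - 2 ≤ ℓ)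
    (K : ℕ) (hK : K = ⌈(k : ℝ) * (3 + 1/c) ^ (ℓ + 2)⌉₊)
    (γ lam : ℝ) (hγ0 : 0 < γ) (hlam0 : 0 < lam)
    (hlam : lam ≤ (2 : ℝ) ^ (-(8 : ℤ) - (ℓ : ℤ)) / ((ρ : ℝ) ^ 3 * (K : ℝ)))
    (hγ : γ ≤ (2 : ℝ) ^ (-(8 : ℤ) - (ℓ : ℤ)) / ((ρ : ℝ) ^ 3 * (K : ℝ)))
    (δ : ℝ) (hδ : δ = (K : ℝ) ^ (-(K : ℤ)) * (Fintype.card V : ℝ) ^ (-c))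
    (I : Finset ℤ) (A : ℤ → Set V) (hA : IsBlockade I A) (hlen : I.card = K)
    (hlink : LinkageLE G I A lam) (hdiv : ¬ Divergent G I A γ δ) :
    ∃ (L : ℕ → Set V) (a : ℕ) (M : ℕ → Set V) (b : ℕ) (J : Finset ℤ) (C : ℤ → Set V),
      IsBiLevelling G L a M b J C ∧ RainbowBiLevelling I A L a M b J C ∧
      J.card = k ∧ a + b = ℓ ∧
      SizeGE I A J C ((2 : ℝ) ^ ((4 : ℤ) - (ℓ : ℤ)) / ((ρ : ℝ) ^ 3 * (K : ℝ))) := by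
  have hρ₁ : 1 + 1 / c ≤ ρ := hρ ▸ Nat.le_ceil _
  have hρ₂ : 1 < ρ := by simpa [hρ, Nat.lt_ceil] using hc
  have hI : k * (ρ + 1) ^ (ℓ + 2) ≤ I.card := by
    rw [hlen, hK, hρ, show 3 + 1 / c = 1 + 1 / c + 2 by ring]
    exact mul_ceil_add_one_pow_le (by positivity)
  have hpow : (ρ + 1) ^ (ℓ + 2) ≤ I.card := (Nat.le_mul_of_pos_left _ hk).trans hI
  have hcard : 1 < I.card := (Nat.one_lt_pow (by omega) (by omega)).trans_le hpow
  obtain ⟨i, hi⟩ := Finset.card_pos.1 (one_pos.trans hcard)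
  have : Nonempty V := ⟨(hA.1 i hi).some⟩
  rw [← Nat.card_eq_fintype_card] at hδ
  subst hlen hδ
  have hθ := two_pow_mul_two_zpow_div (by positivity : (ρ : ℝ) ^ 3 * I.card ≠ 0) 8 ℓ
  have S := NondivergentBlockade.of_le hA hcard hlink hdiv hlam hγ
  have D := regime_of_succ_pow_le hc (Nat.card_pos (α := V)) hρ₁ (by omega) hpow hθ
  have H := (hasBiLevelling_of_mul_succ_pow_le S D hk hℓ hI hθ).exists_isBiLevelling hA
    (by positivity)
  rwa [← two_zpow_add_sub_div] at H

end PurePairs
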